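/- arXiv:2510.20511 — 2 statements merged into one kernel-verified Lean document; each statement's English description precedes it below -/
import Mathlib

section
/- For every n ≥ 1, the coefficient κ_n satisfies 2 ≤ κ_n ≤ 2·ψ_n. -/
/-!
Upper bound. Let `M = E [X₁ (X ⊗ X)]` and `h(x) = ⟨M x, x⟩`. Then `‖M‖² = E [X₁ h(X)]`, which by
Cauchy–Schwarz is at most `(Var h(X))^{1/2}`, as `X₁` is centered with unit variance. The gradient
of `h` is `2 M x`, so the Poincaré inequality and isotropy give
`‖M‖² ≤ ψₙ (E |2 M X|²)^{1/2} = 2 ψₙ ‖M‖` (`hsNorm_le_two_mul_KLSConst`).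

Lower bound. For a vector with independent centered standard exponential coordinates,
`E X₁³ = 2` is an entry of `M` (`two_le_hsNorm_expMeasure`).

Two further points are needed because suprema, infima and integrals are real-valued here.

* `ψₙ` must be finite in each dimension. An isotropic log-concave density decays exponentially away
  from a near-maximum, at a scale depending only on `n` (`IsLogConcaveDensity.exists_decay`).
  Writing `f x - f y` as the sum of the increments from `x` and from `y` to the midpoint and
  integrating the gradient along the two half-segments gives a Poincaré inequality with the
  dimensional constant `poincareBound n` (`IsLogConcaveDensity.lintegral_midpoint_le`,
  `poincare_of_integrable`).
* The integral of a non-integrable function is `0`, so for a measure of unbounded support the set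
  of constants in the definition of `poincareConst` may be empty, and `poincareConst` is then `0`.
  The Poincaré inequality with `ψₙ` is therefore read off from the definition for compactly
  supported measures only (`variance_le_KLSConst`). A general isotropic log-concave measure is
  conditioned on large balls, the truncations are made isotropic by affine maps
  (`variance_le_KLSConst_mul_covMatrix`) whose linear parts tend to an isometry, and Fatou's lemma
  gives the inequality in the limit, together with the finiteness of the variance
  (`poincare_KLSConst`).
-/

open MeasureTheory Real Pointwise RealInnerProductSpace
open scoped ENNReal

noncomputable section

/-- A convex body: a compact convex set with non-empty interior. -/
def IsConvexBody {n : ℕ} (K : Set (EuclideanSpace ℝ (Fin n))) : Prop :=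
  IsCompact K ∧ Convex ℝ K ∧ (interior K).Nonempty

/-- The uniform probability measure on a set `K`. -/
def unifOn {n : ℕ} (K : Set (EuclideanSpace ℝ (Fin n))) : Measure (EuclideanSpace ℝ (Fin n)) :=
  (volume K)⁻¹ • volume.restrict K

/-- A probability measure `μ` on `ℝⁿ` is isotropic: its barycenter vanishes and its
covariance matrix is the identity. -/
def IsIsotropicMeasure {n : ℕ} (μ : Measure (EuclideanSpace ℝ (Fin n))) : Prop :=
  (∀ i, ∫ x, x i ∂μ = 0) ∧ ∀ i j, ∫ x, x i * x j ∂μ = if i = j then 1 else 0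

/-- A convex body is in isotropic position if the uniform probability measure on it
is isotropic. -/
def IsIsotropicBody {n : ℕ} (K : Set (EuclideanSpace ℝ (Fin n))) : Prop :=
  IsIsotropicMeasure (unifOn K)

/-- A log-concave density: nonnegative, and multiplicatively convex. This is equivalent to:
`{p > 0}` is convex and `log (1/p)` is convex on it. -/
def IsLogConcaveDensity {n : ℕ} (p : EuclideanSpace ℝ (Fin n) → ℝ) : Prop :=
  (∀ x, 0 ≤ p x) ∧ ∀ x y : EuclideanSpace ℝ (Fin n), ∀ t : ℝ, 0 ≤ t → t ≤ 1 →
    p x ^ t * p y ^ (1 - t) ≤ p (t • x + (1 - t) • y)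

/-- A measure on `ℝⁿ` is log-concave if it has a log-concave density w.r.t. Lebesgue. -/
def IsLogConcaveMeasure {n : ℕ} (μ : Measure (EuclideanSpace ℝ (Fin n))) : Prop :=
  ∃ p : EuclideanSpace ℝ (Fin n) → ℝ, Measurable p ∧ IsLogConcaveDensity p ∧
    μ = volume.withDensity fun x => ENNReal.ofReal (p x)

/-- The standard Gaussian probability measure on `ℝⁿ`. -/
def stdGaussian (n : ℕ) : Measure (EuclideanSpace ℝ (Fin n)) :=
  volume.withDensity fun x => ENNReal.ofReal ((2 * π) ^ (-(n : ℝ) / 2) * Real.exp (-‖x‖ ^ 2 / 2))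

/-- The Poincaré constant of a measure: the least `A ≥ 0` such that
`Var f ≤ A ⬝ E |∇ f|²` for all locally Lipschitz `f`. -/
def poincareConst {n : ℕ} (μ : Measure (EuclideanSpace ℝ (Fin n))) : ℝ :=
  sInf {A : ℝ | 0 ≤ A ∧ ∀ f : EuclideanSpace ℝ (Fin n) → ℝ, LocallyLipschitz f →
    ∫ x, (f x - ∫ y, f y ∂μ) ^ 2 ∂μ ≤ A * ∫ x, ‖gradient f x‖ ^ 2 ∂μ}

/-- The KLS constant `ψₙ`. -/
def KLSConst (n : ℕ) : ℝ :=
  sSup {s : ℝ | ∃ μ : Measure (EuclideanSpace ℝ (Fin n)), IsProbabilityMeasure μ ∧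
    IsLogConcaveMeasure μ ∧ IsIsotropicMeasure μ ∧ s = Real.sqrt (poincareConst μ)}

/-- The Hilbert-Schmidt norm of a matrix. -/
def hsNorm {n : ℕ} (M : Matrix (Fin n) (Fin n) ℝ) : ℝ :=
  Real.sqrt (∑ i, ∑ j, (M i j) ^ 2)

/-- The coefficient `κₙ`, the supremum of `‖E [X₁ (X ⊗ X)]‖_HS` over all isotropic
log-concave random vectors `X` in `ℝⁿ`. -/
def kappaConst (n : ℕ) : ℝ :=
  sSup {s : ℝ | ∃ μ : Measure (EuclideanSpace ℝ (Fin n)), IsProbabilityMeasure μ ∧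
    IsLogConcaveMeasure μ ∧ IsIsotropicMeasure μ ∧ ∃ h : 0 < n,
    s = hsNorm (Matrix.of fun i j => ∫ x, x ⟨0, h⟩ * (x i * x j) ∂μ)}

/-- A gauge function on `ℝⁿ`: non-negative, convex, positively homogeneous. -/
def IsGauge {n : ℕ} (f : EuclideanSpace ℝ (Fin n) → ℝ) : Prop :=
  (∀ x, 0 ≤ f x) ∧ ConvexOn ℝ Set.univ f ∧
    ∀ (c : ℝ), 0 ≤ c → ∀ x, f (c • x) = c * f x

/-- `M(K)`: the mean of the Minkowski functional of `K` over the unit sphere, w.r.t. the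
uniform probability measure on the sphere. -/
def Mparam (n : ℕ) (K : Set (EuclideanSpace ℝ (Fin n))) : ℝ :=
  ∫ x : Metric.sphere (0 : EuclideanSpace ℝ (Fin n)) 1,
    gauge K x ∂(((volume : Measure (EuclideanSpace ℝ (Fin n))).toSphere Set.univ)⁻¹ •
      (volume : Measure (EuclideanSpace ℝ (Fin n))).toSphere)

/-- The polar body. -/
def polarBody {n : ℕ} (K : Set (EuclideanSpace ℝ (Fin n))) : Set (EuclideanSpace ℝ (Fin n)) :=
  {x | ∀ y ∈ K, ⟪x, y⟫ ≤ 1}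

/-- `R(K)`: the maximal Euclidean norm of a point of `K`. -/
def Rparam {n : ℕ} (K : Set (EuclideanSpace ℝ (Fin n))) : ℝ :=
  sSup {r : ℝ | ∃ x ∈ K, r = ‖x‖}

/-- The operator norm `‖A : K → T‖ = sup_{x ≠ 0} ‖Ax‖_T / ‖x‖_K` (Minkowski functionals). -/
def mapNorm {n : ℕ} (K T : Set (EuclideanSpace ℝ (Fin n)))
    (A : Matrix (Fin n) (Fin n) ℝ) : ℝ :=
  sSup {r : ℝ | ∃ x : EuclideanSpace ℝ (Fin n), x ≠ 0 ∧
    r = gauge T (Matrix.toEuclideanLin A x) / gauge K x}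

/-- The ℓ₂ operator norm of a matrix. -/
def matOpNorm {n : ℕ} (M : Matrix (Fin n) (Fin n) ℝ) : ℝ :=
  ‖LinearMap.toContinuousLinearMap (Matrix.toEuclideanLin M)‖

/-! ### Decay of log-concave densities -/

theorem lintegral_comp_smul_add {n : ℕ} (F : EuclideanSpace ℝ (Fin n) → ℝ≥0∞) (hF : Measurable F)
    {s : ℝ} (hs : 0 < s) (c : EuclideanSpace ℝ (Fin n)) :
    ∫⁻ x, F (s • x + c) = ENNReal.ofReal ((s ^ n)⁻¹) * ∫⁻ x, F x := by
  have h1 := Measure.map_addHaar_smul (volume : Measure (EuclideanSpace ℝ (Fin n))) hs.ne'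
  rw [finrank_euclideanSpace_fin, abs_of_pos (by positivity)] at h1
  have h2 : ∫⁻ x, F (s • x + c) = ∫⁻ z, F (z + c) ∂(Measure.map (s • ·)
      (volume : Measure (EuclideanSpace ℝ (Fin n)))) := by
    rw [lintegral_map (by fun_prop) (by fun_prop)]
  rw [h2, h1, lintegral_smul_measure, lintegral_add_right_eq_self, smul_eq_mul]

theorem IsLogConcaveDensity.sqrt_mul_sqrt_le {n : ℕ} {p : EuclideanSpace ℝ (Fin n) → ℝ}
    (h : IsLogConcaveDensity p) (x y : EuclideanSpace ℝ (Fin n)) :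
    √(p x) * √(p y) ≤ p ((1 / 2 : ℝ) • y + (1 / 2 : ℝ) • x) := by
  have := h.2 y x (1/2) (by norm_num) (by norm_num)
  rw [Real.sqrt_eq_rpow, Real.sqrt_eq_rpow, mul_comm]
  convert this using 2 <;> norm_num

/-- Log-concavity at the midpoints `(x + y) / 2`, integrated over `y` against a weight `w`. -/
theorem IsLogConcaveDensity.lintegral_sqrt_le {n : ℕ} {p : EuclideanSpace ℝ (Fin n) → ℝ}
    (h : IsLogConcaveDensity p) (hp : Measurable p) (x : EuclideanSpace ℝ (Fin n))
    {w : EuclideanSpace ℝ (Fin n) → ℝ≥0∞} (hw : Measurable w) :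
    ENNReal.ofReal √(p x) *
      ∫⁻ y, w ((1 / 2 : ℝ) • y + (1 / 2 : ℝ) • x) * ENNReal.ofReal √(p y)
      ≤ 2 ^ n * ∫⁻ z, w z * ENNReal.ofReal (p z) := by
  have h2 := lintegral_comp_smul_add (fun z => w z * ENNReal.ofReal (p z)) (by fun_prop)
    (s := 1/2) (by norm_num) ((1/2 : ℝ) • x)
  have h3 : ENNReal.ofReal ((((1:ℝ)/2)^n)⁻¹) = 2 ^ n := by
    rw [← inv_pow, ENNReal.ofReal_pow (by norm_num)]; norm_num
  rw [h3] at h2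
  rw [← h2, ← lintegral_const_mul _ (by fun_prop)]
  refine lintegral_mono fun y => ?_
  rw [mul_left_comm, ← ENNReal.ofReal_mul (by positivity)]
  gcongr
  exact h.sqrt_mul_sqrt_le x y

/-- Log-concavity at midpoints gives `√(p x) ∫ √p ≤ 2ⁿ ∫ p`, and `∫ √p` is positive. -/
theorem IsLogConcaveDensity.exists_bound {n : ℕ} {p : EuclideanSpace ℝ (Fin n) → ℝ}
    (h : IsLogConcaveDensity p) (hp : Measurable p) (h1 : ∫⁻ x, ENNReal.ofReal (p x) = 1) :
    ∃ B, ∀ x, p x ≤ B := by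
  set J := ∫⁻ y, ENNReal.ofReal √(p y) with hJ
  have hJ0 : J ≠ 0 := by
    intro h0
    rw [hJ, lintegral_eq_zero_iff (by fun_prop)] at h0
    have : ∫⁻ x, ENNReal.ofReal (p x) = 0 := by
      rw [lintegral_eq_zero_iff (by fun_prop)]
      filter_upwards [h0] with x hx
      have hx' : √(p x) ≤ 0 := by simpa using hx
      have hx2 : √(p x) = 0 := le_antisymm hx' (Real.sqrt_nonneg _)
      simpa [Real.sqrt_eq_zero'] using hx2
    simp [this] at h1
  refine ⟨((2 ^ n / J).toReal) ^ 2, fun x => ?_⟩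
  have h3 := h.lintegral_sqrt_le hp x (w := fun _ => 1) measurable_const
  simp only [one_mul, h1, mul_one] at h3
  rw [← hJ] at h3
  have h4 : ENNReal.ofReal √(p x) ≤ 2 ^ n / J := by
    rw [ENNReal.le_div_iff_mul_le (Or.inl hJ0) (Or.inr (by finiteness))]
    exact h3
  have h5 : √(p x) ≤ (2 ^ n / J).toReal := by
    rw [← ENNReal.ofReal_le_iff_le_toReal]
    · exact h4
    · exact ENNReal.div_ne_top (by finiteness) hJ0
  calc p x = √(p x) ^ 2 := (Real.sq_sqrt (h.1 x)).symm
    _ ≤ _ := by gcongr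

/-- A log-concave probability density with second moment at most `n` is, relative to its
supremum `M`, quadratically small at infinity. -/
theorem IsLogConcaveDensity.sqrt_mul_sq_le {n : ℕ} {p : EuclideanSpace ℝ (Fin n) → ℝ}
    (h : IsLogConcaveDensity p) (hp : Measurable p) (h1 : ∫⁻ x, ENNReal.ofReal (p x) = 1)
    (h2 : ∫⁻ x, ENNReal.ofReal (‖x‖ ^ 2) * ENNReal.ofReal (p x) ≤ ENNReal.ofReal n)
    {M : ℝ} (hM : ∀ x, p x ≤ M) (x : EuclideanSpace ℝ (Fin n)) :
    √(p x) * ‖x‖ ^ 2 ≤ 10 * 2 ^ n * n * √M := by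
  have hM0 : 0 ≤ M := (h.1 x).trans (hM x)
  have h3 := h.lintegral_sqrt_le hp x (w := fun z => ENNReal.ofReal (‖z‖ ^ 2)) (by fun_prop)
  have key : ENNReal.ofReal (√(p x) * ‖x‖ ^ 2 / 8) ≤
      ENNReal.ofReal (√M * (2 ^ n * n)) + ENNReal.ofReal (√M * n / 4) := by
    calc ENNReal.ofReal (√(p x) * ‖x‖ ^ 2 / 8)
        = ∫⁻ y, ENNReal.ofReal (√(p x) * ‖x‖ ^ 2 / 8) * ENNReal.ofReal (p y) := by
          rw [lintegral_const_mul _ (by fun_prop), h1, mul_one]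
      _ ≤ ∫⁻ y, (ENNReal.ofReal √M * (ENNReal.ofReal √(p x) *
            (ENNReal.ofReal (‖(1 / 2 : ℝ) • y + (1 / 2 : ℝ) • x‖ ^ 2) * ENNReal.ofReal √(p y)))
            + ENNReal.ofReal (√M / 4) * (ENNReal.ofReal (‖y‖ ^ 2) * ENNReal.ofReal (p y))) := by
          refine lintegral_mono fun y => ?_
          have hy := h.1 y
          rw [← ENNReal.ofReal_mul (by positivity), ← ENNReal.ofReal_mul (by positivity),
            ← ENNReal.ofReal_mul (by positivity), ← ENNReal.ofReal_mul (by positivity),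
            ← ENNReal.ofReal_mul (by positivity), ← ENNReal.ofReal_mul (by positivity),
            ← ENNReal.ofReal_add (by positivity) (by positivity)]
          apply ENNReal.ofReal_le_ofReal
          have e1 : ‖x‖ ≤ 2 * ‖(1 / 2 : ℝ) • y + (1 / 2 : ℝ) • x‖ + ‖y‖ := by
            have : x = (2:ℝ) • ((1 / 2 : ℝ) • y + (1 / 2 : ℝ) • x) - y := by
              rw [smul_add, smul_smul, smul_smul]; norm_num
            calc ‖x‖ = ‖(2:ℝ) • ((1 / 2 : ℝ) • y + (1 / 2 : ℝ) • x) - y‖ := by rw [← this]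
              _ ≤ _ := (norm_sub_le _ _).trans (by rw [norm_smul]; norm_num)
          set m := ‖(1 / 2 : ℝ) • y + (1 / 2 : ℝ) • x‖
          have hm : 0 ≤ m := norm_nonneg _
          have e2 : ‖x‖ ^ 2 ≤ 8 * m ^ 2 + 2 * ‖y‖ ^ 2 := by
            nlinarith [norm_nonneg x, norm_nonneg y, sq_nonneg (2 * m - ‖y‖)]
          have e3 : p y ≤ √M * √(p y) := by
            calc p y = √(p y) * √(p y) := (Real.mul_self_sqrt hy).symm
              _ ≤ _ := by gcongr; exact hM y
          have e4 : √(p x) ≤ √M := Real.sqrt_le_sqrt (hM x)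
          calc √(p x) * ‖x‖ ^ 2 / 8 * p y
              ≤ √(p x) * (8 * m ^ 2 + 2 * ‖y‖ ^ 2) / 8 * p y := by gcongr
            _ = √(p x) * m ^ 2 * p y + √(p x) / 4 * (‖y‖ ^ 2 * p y) := by ring
            _ ≤ √(p x) * m ^ 2 * (√M * √(p y)) + √M / 4 * (‖y‖ ^ 2 * p y) := by gcongr
            _ = _ := by ring
      _ ≤ _ := by
          rw [lintegral_add_left (by fun_prop), lintegral_const_mul _ (by fun_prop),
            lintegral_const_mul _ (by fun_prop), lintegral_const_mul _ (by fun_prop)]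
          refine add_le_add ?_ ?_
          · rw [ENNReal.ofReal_mul (by positivity)]
            refine mul_le_mul_right ?_ _
            refine h3.trans ?_
            rw [ENNReal.ofReal_mul (by positivity), ENNReal.ofReal_pow (by norm_num)]
            norm_num
            gcongr
            simpa using h2
          · rw [show √M * n / 4 = √M / 4 * n by ring, ENNReal.ofReal_mul (by positivity)]
            gcongr
  rw [← ENNReal.ofReal_add (by positivity) (by positivity),
    ENNReal.ofReal_le_ofReal_iff (by positivity)] at key
  have e5 : (1 : ℝ) ≤ 2 ^ n := one_le_pow₀ (by norm_num)
  have e6 : 0 ≤ √M * n := by positivity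
  nlinarith

/-- The length scale, depending only on the dimension, at which isotropic log-concave densities
decay exponentially. -/
def decayScale (n : ℕ) : ℝ := 80 * 2 ^ n * (n + 1)

theorem decayScale_pos (n : ℕ) : 0 < decayScale n := by unfold decayScale; positivity

/-- Exponential decay of a log-concave density `p` away from a near-maximum `x₀`: `p` is at most
`M / 16` on the sphere of radius `decayScale n` about `x₀`, and log-concavity along rays from `x₀`
turns this drop into exponential decay. -/
theorem IsLogConcaveDensity.exists_decay {n : ℕ} {p : EuclideanSpace ℝ (Fin n) → ℝ}
    (h : IsLogConcaveDensity p) (hp : Measurable p) (h1 : ∫⁻ x, ENNReal.ofReal (p x) = 1)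
    (h2 : ∫⁻ x, ENNReal.ofReal (‖x‖ ^ 2) * ENNReal.ofReal (p x) ≤ ENNReal.ofReal n) :
    ∃ (M : ℝ) (x₀ : EuclideanSpace ℝ (Fin n)), 0 < M ∧ (∀ x, p x ≤ M) ∧ M / 2 ≤ p x₀ ∧
      ∀ x, p x ≤ M * exp (1 - ‖x - x₀‖ / decayScale n) := by
  obtain ⟨B, hB⟩ := h.exists_bound hp h1
  have hbdd : BddAbove (Set.range p) := ⟨B, by rintro _ ⟨x, rfl⟩; exact hB x⟩
  set M := ⨆ x, p x with hMdef
  have hM : ∀ x, p x ≤ M := fun x => le_ciSup hbdd x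
  have hM0 : 0 < M := by
    by_contra hneg
    have : ∫⁻ x, ENNReal.ofReal (p x) = 0 := by
      rw [lintegral_eq_zero_iff (by fun_prop)]
      filter_upwards with x
      simpa using (hM x).trans (not_lt.1 hneg)
    simp [this] at h1
  obtain ⟨x₀, hx₀⟩ : ∃ x, M / 2 < p x := exists_lt_of_lt_ciSup (by rw [← hMdef]; linarith)
  set K : ℝ := 10 * 2 ^ n * (n + 1) with hK
  have hK1 : 1 ≤ K := by
    have e5 : (1 : ℝ) ≤ 2 ^ n := one_le_pow₀ (by norm_num)
    have : (0 : ℝ) ≤ n := by positivity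
    nlinarith
  have far : ∀ x : EuclideanSpace ℝ (Fin n), 4 * K ≤ ‖x‖ → p x ≤ M / 16 := by
    intro x hx
    have e1 := h.sqrt_mul_sq_le hp h1 h2 hM x
    have e2 : 10 * 2 ^ n * n * √M ≤ K * √M := by rw [hK]; gcongr; linarith
    have e3 : √(p x) * (4 * K) ≤ √(p x) * ‖x‖ ^ 2 := by gcongr; nlinarith
    have e4 : √(p x) ≤ √M / 4 := by
      have : K * (4 * √(p x)) ≤ K * √M := by linarith
      have := le_of_mul_le_mul_left this (by linarith)
      linarith
    calc p x = √(p x) ^ 2 := (Real.sq_sqrt (h.1 x)).symm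
      _ ≤ (√M / 4) ^ 2 := by gcongr
      _ = M / 16 := by rw [div_pow, Real.sq_sqrt hM0.le]; norm_num
  have hρ : decayScale n = 8 * K := by rw [hK, decayScale]; ring
  have hρ0 := decayScale_pos n
  refine ⟨M, x₀, hM0, hM, hx₀.le, fun x => ?_⟩
  rcases le_or_gt ‖x - x₀‖ (decayScale n) with hle | hlt
  · refine (hM x).trans (le_mul_of_one_le_right hM0.le ?_)
    rw [Real.one_le_exp_iff]
    have := (div_le_one hρ0).2 hle
    linarith
  · have hx₀K : ‖x₀‖ < 4 * K := by
      by_contra hcon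
      have := far x₀ (not_lt.1 hcon)
      linarith
    have hL : 0 < ‖x - x₀‖ := hρ0.trans hlt
    set s := decayScale n / ‖x - x₀‖ with hs
    have hs0 : 0 < s := by positivity
    have hs1 : s ≤ 1 := (div_le_one hL).2 hlt.le
    have e1 := h.2 x x₀ s hs0.le hs1
    have e2 : 4 * K ≤ ‖s • x + (1 - s) • x₀‖ := by
      have : s • x + (1 - s) • x₀ = s • (x - x₀) - (- x₀) := by module
      rw [this]
      have e3 := norm_sub_norm_le (s • (x - x₀)) (-x₀)
      rw [norm_smul, norm_neg, Real.norm_of_nonneg hs0.le, hs, div_mul_cancel₀ _ hL.ne'] at e3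
      rw [← hs] at e3
      linarith
    have e4 := e1.trans (far _ e2)
    -- Divide by `M` and use `p x₀ ≥ M / 2`.
    have e5 : M ^ (1 - s) / 2 ≤ p x₀ ^ (1 - s) := by
      have : M ^ (1 - s) / 2 ≤ (M / 2) ^ (1 - s) := by
        rw [Real.div_rpow hM0.le (by norm_num)]
        gcongr
        calc (2 : ℝ) ^ (1 - s) ≤ 2 ^ (1 : ℝ) := by
              apply Real.rpow_le_rpow_of_exponent_le <;> linarith
          _ = 2 := by simp
      refine this.trans ?_
      apply Real.rpow_le_rpow (by linarith) hx₀.le (by linarith)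
    have e6 : (p x / M) ^ s ≤ exp (-1) := by
      have hx := h.1 x
      have e7 : p x ^ s * (M ^ (1 - s) / 2) ≤ M / 16 :=
        (mul_le_mul_of_nonneg_left e5 (by positivity)).trans e4
      rw [Real.rpow_sub hM0, Real.rpow_one] at e7
      rw [Real.div_rpow hx hM0.le]
      have hMs : 0 < M ^ s := by positivity
      have e8 : p x ^ s / M ^ s ≤ 1 / 8 := by
        have : M * (p x ^ s / M ^ s) ≤ M * (1 / 8) := by
          calc _ = 2 * (p x ^ s * (M / M ^ s / 2)) := by ring
            _ ≤ _ := by linarith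
        exact le_of_mul_le_mul_left this hM0
      refine e8.trans ?_
      have : exp 1 < 8 := Real.exp_one_lt_d9.trans (by norm_num)
      rw [Real.exp_neg, one_div]
      gcongr
    have e9 : p x / M ≤ exp (-(‖x - x₀‖ / decayScale n)) := by
      have hx := h.1 x
      have := Real.rpow_le_rpow (by positivity) e6 (inv_nonneg.2 hs0.le)
      rw [← Real.rpow_mul (by positivity), mul_inv_cancel₀ hs0.ne', Real.rpow_one,
        ← Real.exp_mul] at this
      convert this using 2
      rw [hs, inv_div]; ring
    rw [div_le_iff₀ hM0, mul_comm] at e9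
    refine e9.trans ?_
    gcongr
    linarith

/-! ### A dimension-dependent Poincaré inequality -/

/-- The numerical inequality behind `IsLogConcaveDensity.weight_bound`: `dx`, `dy`, `dz` stand for
the distances from `x`, `y` and `z = (1 - t) x + t y` to `x₀`, and `L` for `‖x - y‖`. -/
theorem exp_weight_bound {l t L dx dy dz : ℝ} (hl : 0 < l) (ht0 : 0 < t) (ht : t < 1 / 2)
    (dx0 : 0 ≤ dx) (dy0 : 0 ≤ dy) (dz0 : 0 ≤ dz) (hLd : L ≤ dx + dy)
    (hdz_le : dz ≤ (1 - t) * dx + t * dy) (hdx_le : (1 - t) * dx ≤ dz + t * dy) :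
    L * (exp (3 / 4 - l * t * dx - l * dy / 4) * exp (l / 8 * t * L)) ≤
      2 * exp 1 * (dz * exp (-(l / 2 * t * dz)) + 16 / l) := by
  have e1 : L ≤ 2 * (dz + dy) := by
    have i1 : t * dx ≤ 1 / 2 * dx := by gcongr
    have i2 : t * dy ≤ 1 / 2 * dy := by gcongr
    linarith
  have e2 : 3 / 4 - l * t * dx - l * dy / 4 + l / 8 * t * L ≤
      1 + -(l / 2 * t * dz) + -(l * dy / 16) := by
    have i1 : l * t * L ≤ l * t * (dx + dy) := by gcongr
    have i2 : l * t * dz ≤ l * t * (dx + t * dy) := by gcongr; nlinarith [mul_nonneg ht0.le dx0]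
    have i3 : l * t * dy ≤ l * (1 / 2) * dy := by gcongr
    have i4 : l * t * t * dy ≤ l * (1 / 2) * (1 / 2) * dy := by gcongr
    have i5 : 0 ≤ l * t * dx := by positivity
    linarith
  have e3 : dy * exp (-(l * dy / 16)) ≤ 16 / l := by
    have := Real.add_one_le_exp (l * dy / 16)
    rw [Real.exp_neg, ← div_eq_mul_inv, div_le_div_iff₀ (exp_pos _) hl]
    nlinarith
  have e4 : exp (-(l / 2 * t * dz)) ≤ 1 := by
    rw [Real.exp_le_one_iff]; have : 0 ≤ l / 2 * t * dz := by positivity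
    linarith
  have e5 : exp (-(l * dy / 16)) ≤ 1 := by
    rw [Real.exp_le_one_iff]; have : 0 ≤ l * dy / 16 := by positivity
    linarith
  calc L * (exp (3 / 4 - l * t * dx - l * dy / 4) * exp (l / 8 * t * L))
      ≤ 2 * (dz + dy) * exp (1 + -(l / 2 * t * dz) + -(l * dy / 16)) := by
        rw [← Real.exp_add]; gcongr
    _ = 2 * exp 1 * ((dz * exp (-(l / 2 * t * dz))) * exp (-(l * dy / 16)) +
          (dy * exp (-(l * dy / 16))) * exp (-(l / 2 * t * dz))) := by
        rw [Real.exp_add, Real.exp_add]; ring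
    _ ≤ 2 * exp 1 * ((dz * exp (-(l / 2 * t * dz))) * 1 + (16 / l) * 1) := by gcongr
    _ = _ := by ring

/-- Replaces the product `p x * p y` by the density at the point `z` of the segment, so that the
gradient of a function at `z` can be integrated against `p z`. Here
`p x * p y = (p x ^ (1 - t) * p y ^ t) * (p x ^ t * p y ^ (1 - t))`: the first factor is at most
`p z`, and the second one pays, by the decay of `p`, for the exponential weight in `‖x - y‖` and
for a factor integrable in `y`. The weight at `z` has a bounded integral over `t`. -/
theorem IsLogConcaveDensity.weight_bound {n : ℕ} {p : EuclideanSpace ℝ (Fin n) → ℝ}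
    (h : IsLogConcaveDensity p) {M l : ℝ} {x₀ : EuclideanSpace ℝ (Fin n)} (hM : 0 < M) (hl : 0 < l)
    (hpM : ∀ x, p x ≤ M) (hx₀ : M / 2 ≤ p x₀)
    (hdec : ∀ x, p x ≤ M * exp (1 - l * ‖x - x₀‖))
    (x y z : EuclideanSpace ℝ (Fin n)) {t : ℝ} (ht0 : 0 < t) (ht : t < 1 / 2)
    (hz : z = (1 - t) • x + t • y) :
    p x * p y * (‖x - y‖ * exp (l / 8 * t * ‖x - y‖)) ≤
      p z * (2 * exp 1 * (‖z - x₀‖ * exp (-(l / 2 * t * ‖z - x₀‖)) + 16 / l)) *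
        (2 * p ((1 / 4 : ℝ) • y + (3 / 4 : ℝ) • x₀)) := by
  have hx := h.1 x
  have hy := h.1 y
  have hzz := h.1 z
  set dx := ‖x - x₀‖ with hdx
  set dy := ‖y - x₀‖ with hdy
  set dz := ‖z - x₀‖ with hdz
  set L := ‖x - y‖ with hL
  have dx0 : 0 ≤ dx := norm_nonneg _
  have dy0 : 0 ≤ dy := norm_nonneg _
  have dz0 : 0 ≤ dz := norm_nonneg _
  have L0 : 0 ≤ L := norm_nonneg _
  have hLd : L ≤ dx + dy := by
    rw [hL, show x - y = (x - x₀) - (y - x₀) by abel]; exact norm_sub_le _ _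
  have hdz_le : dz ≤ (1 - t) * dx + t * dy := by
    rw [hdz, show z - x₀ = (1 - t) • (x - x₀) + t • (y - x₀) by rw [hz]; module]
    refine (norm_add_le _ _).trans ?_
    rw [norm_smul, norm_smul, Real.norm_of_nonneg ht0.le, Real.norm_of_nonneg (by linarith)]
  have hdx_le : (1 - t) * dx ≤ dz + t * dy := by
    have : (1 - t) • (x - x₀) = (z - x₀) - t • (y - x₀) := by rw [hz]; module
    have e := congrArg norm this
    rw [norm_smul, Real.norm_of_nonneg (by linarith)] at e
    rw [hdx, e]
    refine (norm_sub_le _ _).trans ?_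
    rw [norm_smul, Real.norm_of_nonneg ht0.le]
  -- Log-concavity at `z` and at a point between `y` and `x₀`.
  have c1 : p x ^ (1 - t) * p y ^ t ≤ p z := by
    have := h.2 x y (1 - t) (by linarith) (by linarith)
    rwa [show 1 - (1 - t) = t by ring, ← hz] at this
  set G := p ((1 / 4 : ℝ) • y + (3 / 4 : ℝ) • x₀) with hG
  have G0 : 0 ≤ G := h.1 _
  have c2 : M * (p y / M) ^ (1 / 4 : ℝ) ≤ 2 * G := by
    have e1 := h.2 y x₀ (1 / 4) (by norm_num) (by norm_num)
    rw [show (1 : ℝ) - 1 / 4 = 3 / 4 by norm_num, ← hG] at e1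
    have e2 : M ^ (3 / 4 : ℝ) / 2 ≤ p x₀ ^ (3 / 4 : ℝ) := by
      calc M ^ (3 / 4 : ℝ) / 2 ≤ M ^ (3 / 4 : ℝ) / 2 ^ (3 / 4 : ℝ) := by
            gcongr
            calc (2 : ℝ) ^ (3 / 4 : ℝ) ≤ 2 ^ (1 : ℝ) := by
                  apply Real.rpow_le_rpow_of_exponent_le <;> norm_num
              _ = 2 := by simp
        _ = (M / 2) ^ (3 / 4 : ℝ) := (Real.div_rpow hM.le (by norm_num) _).symm
        _ ≤ _ := Real.rpow_le_rpow (by linarith) hx₀ (by norm_num)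
    have e3 : M = M ^ (3 / 4 : ℝ) * M ^ (1 / 4 : ℝ) := by
      rw [← Real.rpow_add hM]; norm_num
    have hM4 : 0 < M ^ (1 / 4 : ℝ) := by positivity
    calc M * (p y / M) ^ (1 / 4 : ℝ) = M ^ (3 / 4 : ℝ) * p y ^ (1 / 4 : ℝ) := by
          rw [Real.div_rpow hy hM.le]
          nth_rewrite 1 [e3]
          field_simp
      _ = 2 * (p y ^ (1 / 4 : ℝ) * (M ^ (3 / 4 : ℝ) / 2)) := by ring
      _ ≤ 2 * (p y ^ (1 / 4 : ℝ) * p x₀ ^ (3 / 4 : ℝ)) := by gcongr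
      _ ≤ _ := by gcongr
  have qy0 : 0 ≤ p y / M := by positivity
  have qy1 : p y / M ≤ 1 := (div_le_one hM).2 (hpM y)
  have c3 : p x ^ t ≤ M ^ t * exp (1 / 2 - l * t * dx) := by
    calc p x ^ t ≤ (M * exp (1 - l * dx)) ^ t := Real.rpow_le_rpow hx (hdec x) ht0.le
      _ = M ^ t * exp ((1 - l * dx) * t) := by
          rw [Real.mul_rpow hM.le (exp_pos _).le, ← Real.exp_mul]
      _ ≤ _ := by gcongr; nlinarith
  have c4 : p y ^ (1 - t) ≤
      M ^ (1 - t) * (p y / M) ^ (1 / 4 : ℝ) * exp (1 / 4 - l * dy / 4) := by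
    have e1 : p y ^ (1 - t) = M ^ (1 - t) * (p y / M) ^ (1 - t) := by
      rw [← Real.mul_rpow hM.le qy0, mul_div_cancel₀ _ hM.ne']
    have e2 : (p y / M) ^ (1 - t) ≤ (p y / M) ^ (1 / 4 + 1 / 4 : ℝ) :=
      Real.rpow_le_rpow_of_exponent_ge' qy0 qy1 (by norm_num) (by linarith)
    rw [Real.rpow_add_of_nonneg qy0 (by norm_num) (by norm_num)] at e2
    have e3 : (p y / M) ^ (1 / 4 : ℝ) ≤ exp (1 / 4 - l * dy / 4) := by
      have : p y / M ≤ exp (1 - l * dy) := by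
        rw [div_le_iff₀ hM, mul_comm]; exact hdec y
      calc _ ≤ (exp (1 - l * dy)) ^ (1 / 4 : ℝ) := Real.rpow_le_rpow qy0 this (by norm_num)
        _ = _ := by rw [← Real.exp_mul]; congr 1; ring
    rw [e1, mul_assoc]
    gcongr
    exact e2.trans (by gcongr)
  have c5 : p x ^ t * p y ^ (1 - t) ≤ 2 * G * exp (3 / 4 - l * t * dx - l * dy / 4) := by
    calc p x ^ t * p y ^ (1 - t) ≤ (M ^ t * exp (1 / 2 - l * t * dx)) *
          (M ^ (1 - t) * (p y / M) ^ (1 / 4 : ℝ) * exp (1 / 4 - l * dy / 4)) := by gcongr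
      _ = ((M ^ t * M ^ (1 - t)) * (p y / M) ^ (1 / 4 : ℝ)) *
          (exp (1 / 2 - l * t * dx) * exp (1 / 4 - l * dy / 4)) := by ring
      _ = (M * (p y / M) ^ (1 / 4 : ℝ)) * exp (3 / 4 - l * t * dx - l * dy / 4) := by
          rw [← Real.rpow_add hM, ← Real.exp_add]
          congr 2
          · norm_num
          · ring
      _ ≤ _ := by gcongr
  have c6 : p x * p y = (p x ^ (1 - t) * p y ^ t) * (p x ^ t * p y ^ (1 - t)) := by
    have e1 : p x ^ (1 - t) * p x ^ t = p x := by
      rw [← Real.rpow_add_of_nonneg hx (by linarith) ht0.le]; simp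
    have e2 : p y ^ t * p y ^ (1 - t) = p y := by
      rw [← Real.rpow_add_of_nonneg hy ht0.le (by linarith)]; simp
    calc p x * p y = (p x ^ (1 - t) * p x ^ t) * (p y ^ t * p y ^ (1 - t)) := by rw [e1, e2]
      _ = _ := by ring
  have c7 : L * (exp (3 / 4 - l * t * dx - l * dy / 4) * exp (l / 8 * t * L)) ≤
      2 * exp 1 * (dz * exp (-(l / 2 * t * dz)) + 16 / l) :=
    exp_weight_bound hl ht0 ht dx0 dy0 dz0 hLd hdz_le hdx_le
  calc p x * p y * (L * exp (l / 8 * t * L))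
      = (p x ^ (1 - t) * p y ^ t) * (p x ^ t * p y ^ (1 - t)) * (L * exp (l / 8 * t * L)) := by
        rw [← c6]
    _ ≤ p z * (2 * G * exp (3 / 4 - l * t * dx - l * dy / 4)) * (L * exp (l / 8 * t * L)) := by
        gcongr
    _ = p z * (L * (exp (3 / 4 - l * t * dx - l * dy / 4) * exp (l / 8 * t * L))) * (2 * G) := by
        ring
    _ ≤ _ := by gcongr

theorem lintegral_mul_exp_neg_le {b : ℝ} (hb : 0 < b) {k : ℝ} (hk : 0 ≤ k) :
    ∫⁻ t in Set.Ioo (0 : ℝ) (1 / 2), ENNReal.ofReal (k * exp (-(b * t * k)))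
      ≤ ENNReal.ofReal (1 / b) := by
  rcases hk.eq_or_lt with rfl | hk
  · simp
  have e1 := integral_exp_mul_Ioi (a := -(b * k)) (by nlinarith [mul_pos hb hk]) 0
  have e0 := integrableOn_exp_mul_Ioi (a := -(b * k)) (by nlinarith [mul_pos hb hk]) 0
  calc ∫⁻ t in Set.Ioo (0 : ℝ) (1 / 2), ENNReal.ofReal (k * exp (-(b * t * k)))
      ≤ ∫⁻ t in Set.Ioi (0 : ℝ), ENNReal.ofReal (k * exp (-(b * t * k))) :=
        lintegral_mono_set Set.Ioo_subset_Ioi_self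
    _ = ∫⁻ t in Set.Ioi (0 : ℝ), ENNReal.ofReal (k * exp (-(b * k) * t)) := by
        congr 1; ext t; congr 3; ring
    _ = ENNReal.ofReal (∫ t in Set.Ioi (0 : ℝ), k * exp (-(b * k) * t)) := by
        rw [ofReal_integral_eq_lintegral_ofReal (e0.const_mul k)]
        filter_upwards with t
        positivity
    _ ≤ _ := by
        apply ENNReal.ofReal_le_ofReal
        rw [integral_const_mul, e1]
        apply le_of_eq
        simp
        field_simp

/-- Cauchy–Schwarz on `(0, 1/2)` with the exponential weight `exp (b t u)`. -/
theorem lintegral_sq_le_exp_weight {b u : ℝ} (hb : 0 < b) (hu : 0 ≤ u) {g : ℝ → ℝ≥0∞}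
    (hg : Measurable g) :
    (∫⁻ t in Set.Ioo (0 : ℝ) (1 / 2), ENNReal.ofReal u * g t) ^ 2 ≤
      ENNReal.ofReal (1 / b) *
        ∫⁻ t in Set.Ioo (0 : ℝ) (1 / 2), ENNReal.ofReal (u * exp (b * t * u)) * g t ^ 2 := by
  have cs := ENNReal.lintegral_mul_le_Lp_mul_Lq
    (volume.restrict (Set.Ioo (0 : ℝ) (1 / 2))) Real.HolderConjugate.two_two
    (f := fun t => ENNReal.ofReal (√u * exp (-(b * t * u) / 2)))
    (g := fun t => ENNReal.ofReal (√u * exp (b * t * u / 2)) * g t)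
    (by fun_prop) (by fun_prop)
  have e1 : ∀ t, ((fun t => ENNReal.ofReal (√u * exp (-(b * t * u) / 2))) *
      (fun t => ENNReal.ofReal (√u * exp (b * t * u / 2)) * g t)) t = ENNReal.ofReal u * g t := by
    intro t
    simp only [Pi.mul_apply]
    rw [← mul_assoc, ← ENNReal.ofReal_mul (by positivity)]
    congr 2
    calc √u * exp (-(b * t * u) / 2) * (√u * exp (b * t * u / 2))
        = (√u * √u) * (exp (-(b * t * u) / 2) * exp (b * t * u / 2)) := by ring
      _ = u := by
        rw [Real.mul_self_sqrt hu, ← Real.exp_add]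
        simp [← add_div]
  have e2 : ∀ t, ENNReal.ofReal (√u * exp (-(b * t * u) / 2)) ^ (2 : ℝ) =
      ENNReal.ofReal (u * exp (-(b * t * u))) := by
    intro t
    rw [ENNReal.rpow_ofNat, ← ENNReal.ofReal_pow (by positivity), mul_pow, Real.sq_sqrt hu,
      ← Real.exp_nat_mul]
    congr 3; push_cast; ring
  have e3 : ∀ t, (ENNReal.ofReal (√u * exp (b * t * u / 2)) * g t) ^ (2 : ℝ) =
      ENNReal.ofReal (u * exp (b * t * u)) * g t ^ 2 := by
    intro t
    rw [ENNReal.rpow_ofNat, mul_pow, ← ENNReal.ofReal_pow (by positivity), mul_pow,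
      Real.sq_sqrt hu, ← Real.exp_nat_mul]
    congr 4; push_cast; ring
  simp only [e1, e2, e3] at cs
  calc _ ≤ _ := pow_le_pow_left' cs 2
    _ = (∫⁻ t in Set.Ioo (0 : ℝ) (1 / 2), ENNReal.ofReal (u * exp (-(b * t * u)))) *
        ∫⁻ t in Set.Ioo (0 : ℝ) (1 / 2), ENNReal.ofReal (u * exp (b * t * u)) * g t ^ 2 := by
        rw [mul_pow, ← ENNReal.rpow_ofNat, ← ENNReal.rpow_ofNat, ← ENNReal.rpow_mul,
          ← ENNReal.rpow_mul]
        norm_num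
    _ ≤ _ := by gcongr; exact lintegral_mul_exp_neg_le hb hu

/-- The fundamental theorem of calculus along half of the segment from `x` to `y`. -/
theorem enorm_sub_midpoint_le {n : ℕ} {f : EuclideanSpace ℝ (Fin n) → ℝ}
    (hf : LocallyLipschitz f) (x y : EuclideanSpace ℝ (Fin n))
    (hd : ∀ᵐ t ∂(volume.restrict (Set.Ioo (0 : ℝ) (1 / 2))),
      DifferentiableAt ℝ f ((1 - t) • x + t • y)) :
    ‖f x - f ((1 / 2 : ℝ) • x + (1 / 2 : ℝ) • y)‖ₑ ≤
      ∫⁻ t in Set.Ioo (0 : ℝ) (1 / 2),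
        ENNReal.ofReal ‖x - y‖ * ‖fderiv ℝ f ((1 - t) • x + t • y)‖ₑ := by
  set γ : ℝ → EuclideanSpace ℝ (Fin n) := fun t => (1 - t) • x + t • y with hγ
  have hγd : ∀ t, HasDerivAt γ (y - x) t := by
    intro t
    have h1 : HasDerivAt (fun s : ℝ => (1 - s) • x) ((-1 : ℝ) • x) t :=
      ((hasDerivAt_id t).const_sub 1).smul_const x
    have h2 : HasDerivAt (fun s : ℝ => s • y) ((1 : ℝ) • y) t :=
      (hasDerivAt_id t).smul_const y
    exact (h1.add h2).congr_deriv (by module)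
  have hγL : LocallyLipschitz (f ∘ γ) := by
    refine hf.comp (ContDiff.locallyLipschitz (𝕂 := ℝ) ?_)
    rw [hγ]; fun_prop
  obtain ⟨K, hK⟩ := (hγL.locallyLipschitzOn (s := Set.uIcc 0 (1 / 2))).exists_lipschitzOnWith_of_compact
    isCompact_uIcc
  have hac := hK.absolutelyContinuousOnInterval
  have hftc := hac.integral_deriv_eq_sub
  have e0 : ‖f x - f ((1 / 2 : ℝ) • x + (1 / 2 : ℝ) • y)‖ₑ =
      ‖∫ t in (0 : ℝ)..(1 / 2), deriv (f ∘ γ) t‖ₑ := by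
    rw [hftc, enorm_sub_rev]
    simp only [Function.comp, hγ]
    norm_num
  rw [e0, intervalIntegral.integral_of_le (by norm_num), integral_Ioc_eq_integral_Ioo]
  refine (enorm_integral_le_lintegral_enorm _).trans ?_
  refine lintegral_mono_ae ?_
  filter_upwards [hd] with t ht
  have : HasDerivAt (f ∘ γ) (fderiv ℝ f (γ t) (y - x)) t :=
    ht.hasFDerivAt.comp_hasDerivAt t (hγd t)
  rw [this.deriv]
  refine (ContinuousLinearMap.le_opENorm _ _).trans ?_
  rw [mul_comm, ← ofReal_norm (y - x), norm_sub_rev]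

/-- Rademacher's theorem for locally Lipschitz functions. -/
theorem LocallyLipschitz.ae_differentiableAt' {n : ℕ} {f : EuclideanSpace ℝ (Fin n) → ℝ}
    (hf : LocallyLipschitz f) : ∀ᵐ x, DifferentiableAt ℝ f x := by
  have : ∀ k : ℕ, ∀ᵐ x, x ∈ Metric.ball (0 : EuclideanSpace ℝ (Fin n)) k →
      DifferentiableAt ℝ f x := by
    intro k
    obtain ⟨K, hK⟩ := (hf.locallyLipschitzOn
      (s := Metric.closedBall 0 (k : ℝ))).exists_lipschitzOnWith_of_compact
      (isCompact_closedBall (0 : EuclideanSpace ℝ (Fin n)) k)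
    filter_upwards [(hK.mono Metric.ball_subset_closedBall).ae_differentiableWithinAt_of_mem]
      with x hx hxk
    exact (hx hxk).differentiableAt (Metric.isOpen_ball.mem_nhds hxk)
  filter_upwards [ae_all_iff.2 this] with x hx
  obtain ⟨k, hk⟩ := exists_nat_gt ‖x‖
  exact hx k (by simpa using hk)

/-- The half-segment estimate integrated over the endpoint `x`, for a fixed endpoint `y`. -/
theorem IsLogConcaveDensity.lintegral_midpoint_le {n : ℕ} {p : EuclideanSpace ℝ (Fin n) → ℝ}
    (h : IsLogConcaveDensity p) (hp : Measurable p)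
    {M l : ℝ} {x₀ : EuclideanSpace ℝ (Fin n)} (hM : 0 < M) (hl : 0 < l)
    (hpM : ∀ x, p x ≤ M) (hx₀ : M / 2 ≤ p x₀)
    (hdec : ∀ x, p x ≤ M * exp (1 - l * ‖x - x₀‖))
    {f : EuclideanSpace ℝ (Fin n) → ℝ} (hf : LocallyLipschitz f)
    (y : EuclideanSpace ℝ (Fin n)) :
    ∫⁻ x, ENNReal.ofReal (p x) * ENNReal.ofReal (p y) *
        ‖f x - f ((1 / 2 : ℝ) • x + (1 / 2 : ℝ) • y)‖ₑ ^ 2 ≤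
      ENNReal.ofReal (160 * exp 1 * 2 ^ n / l ^ 2) *
        (∫⁻ z, ENNReal.ofReal (p z) * ‖fderiv ℝ f z‖ₑ ^ 2) *
        ENNReal.ofReal (2 * p ((1 / 4 : ℝ) • y + (3 / 4 : ℝ) • x₀)) := by
  set I : Measure ℝ := volume.restrict (Set.Ioo (0 : ℝ) (1 / 2)) with hI
  set G := 2 * p ((1 / 4 : ℝ) • y + (3 / 4 : ℝ) • x₀) with hG
  have G0 : 0 ≤ G := mul_nonneg (by norm_num) (h.1 _)
  have hgm : Measurable fun z => ‖fderiv ℝ f z‖ₑ := (measurable_fderiv ℝ f).enorm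
  have htI : ∀ᵐ t ∂I, t ∈ Set.Ioo (0 : ℝ) (1 / 2) := ae_restrict_mem measurableSet_Ioo
  -- Rademacher, transported to almost every segment ending at `y`.
  have hdiff : ∀ᵐ x : EuclideanSpace ℝ (Fin n), ∀ᵐ t ∂I,
      DifferentiableAt ℝ f ((1 - t) • x + t • y) := by
    have hms : MeasurableSet {z | DifferentiableAt ℝ f z} := measurableSet_of_differentiableAt ℝ f
    have hcont : Measurable fun q : EuclideanSpace ℝ (Fin n) × ℝ =>
        (1 - q.2) • q.1 + q.2 • y := by fun_prop
    refine (Measure.ae_ae_comm (μ := (volume : Measure (EuclideanSpace ℝ (Fin n)))) (ν := I)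
      (p := fun x t => DifferentiableAt ℝ f ((1 - t) • x + t • y)) (hcont hms)).2 ?_
    filter_upwards [htI] with t ht
    have ht' : 0 < 1 - t := by linarith [ht.2]
    have := lintegral_comp_smul_add ({z | DifferentiableAt ℝ f z}ᶜ.indicator 1)
      ((measurable_one).indicator hms.compl) ht' (t • y)
    have hnull : volume {z | DifferentiableAt ℝ f z}ᶜ = 0 := ae_iff.1 hf.ae_differentiableAt'
    have hm : Measurable fun x : EuclideanSpace ℝ (Fin n) =>
        ({z | DifferentiableAt ℝ f z}ᶜ.indicator (1 : EuclideanSpace ℝ (Fin n) → ℝ≥0∞))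
          ((1 - t) • x + t • y) :=
      ((measurable_one).indicator hms.compl).comp
        (by fun_prop : Measurable fun x : EuclideanSpace ℝ (Fin n) => (1 - t) • x + t • y)
    rw [lintegral_indicator_one hms.compl, hnull, mul_zero, lintegral_eq_zero_iff hm] at this
    filter_upwards [this] with x hx
    by_contra hcon
    simp [Set.indicator, hcon] at hx
  set W : ℝ → EuclideanSpace ℝ (Fin n) → ℝ := fun t z =>
    2 * exp 1 * (‖z - x₀‖ * exp (-(l / 2 * t * ‖z - x₀‖)) + 16 / l) with hW
  have W0 : ∀ t z, 0 ≤ W t z := fun t z => by rw [hW]; positivity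
  have hWm : Measurable fun q : ℝ × EuclideanSpace ℝ (Fin n) => W q.1 q.2 := by rw [hW]; fun_prop
  set Φ : ℝ → EuclideanSpace ℝ (Fin n) → ℝ≥0∞ := fun t z =>
    ENNReal.ofReal (p z) * ‖fderiv ℝ f z‖ₑ ^ 2 * ENNReal.ofReal (W t z) with hΦ
  have hΦm : Measurable fun q : ℝ × EuclideanSpace ℝ (Fin n) => Φ q.1 q.2 := by
    rw [hΦ]
    exact (((hp.comp measurable_snd).ennreal_ofReal).mul
      ((hgm.comp measurable_snd).pow_const 2)).mul hWm.ennreal_ofReal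
  have step1 : ∀ᵐ x : EuclideanSpace ℝ (Fin n), ENNReal.ofReal (p x) * ENNReal.ofReal (p y) *
        ‖f x - f ((1 / 2 : ℝ) • x + (1 / 2 : ℝ) • y)‖ₑ ^ 2 ≤
      ENNReal.ofReal (8 / l) * ENNReal.ofReal G * ∫⁻ t, Φ t ((1 - t) • x + t • y) ∂I := by
    filter_upwards [hdiff] with x hx
    have e1 := enorm_sub_midpoint_le hf x y hx
    have e2 := lintegral_sq_le_exp_weight (b := l / 8) (u := ‖x - y‖)
      (g := fun t => ‖fderiv ℝ f ((1 - t) • x + t • y)‖ₑ) (by positivity) (norm_nonneg _)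
      (hgm.comp (by fun_prop))
    have e3 := (pow_le_pow_left' e1 2).trans e2
    rw [show 1 / (l / 8) = 8 / l by field_simp] at e3
    calc _ ≤ ENNReal.ofReal (p x) * ENNReal.ofReal (p y) * (ENNReal.ofReal (8 / l) *
          ∫⁻ t, ENNReal.ofReal (‖x - y‖ * exp (l / 8 * t * ‖x - y‖)) *
            ‖fderiv ℝ f ((1 - t) • x + t • y)‖ₑ ^ 2 ∂I) := by gcongr
      _ = ENNReal.ofReal (8 / l) * ∫⁻ t, ENNReal.ofReal (p x * p y *
            (‖x - y‖ * exp (l / 8 * t * ‖x - y‖))) *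
            ‖fderiv ℝ f ((1 - t) • x + t • y)‖ₑ ^ 2 ∂I := by
          rw [mul_left_comm, ← ENNReal.ofReal_mul (h.1 x), ← lintegral_const_mul]
          · congr 2; ext t
            rw [← mul_assoc, ← ENNReal.ofReal_mul (mul_nonneg (h.1 x) (h.1 y))]
          · exact Measurable.mul (by fun_prop) ((hgm.comp (by fun_prop)).pow_const 2)
      _ ≤ ENNReal.ofReal (8 / l) * ∫⁻ t, ENNReal.ofReal G *
            Φ t ((1 - t) • x + t • y) ∂I := by
          refine mul_le_mul_right (lintegral_mono_ae ?_) _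
          filter_upwards [htI] with t ht
          have := h.weight_bound hM hl hpM hx₀ hdec x y _ ht.1 ht.2 rfl
          calc _ ≤ ENNReal.ofReal (p ((1 - t) • x + t • y) * W t ((1 - t) • x + t • y) * G) *
                ‖fderiv ℝ f ((1 - t) • x + t • y)‖ₑ ^ 2 := by gcongr
            _ = _ := by
              rw [ENNReal.ofReal_mul (mul_nonneg (h.1 _) (W0 _ _)), ENNReal.ofReal_mul (h.1 _)]
              simp only [hΦ]
              ring
      _ = _ := by
          rw [lintegral_const_mul, mul_assoc]
          exact hΦm.comp (f := fun t => (t, (1 - t) • x + t • y)) (by fun_prop)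
  have step2 : ∀ᵐ t ∂I, ∫⁻ x, Φ t ((1 - t) • x + t • y) ≤
      ENNReal.ofReal (2 ^ n) * ∫⁻ z, Φ t z := by
    filter_upwards [htI] with t ht
    have ht' : 1 / 2 < 1 - t := by linarith [ht.2]
    rw [lintegral_comp_smul_add (Φ t) (hΦm.comp (f := fun z => (t, z)) (by fun_prop))
      (by linarith) (t • y)]
    gcongr
    rw [← inv_pow]
    refine pow_le_pow_left₀ (inv_nonneg.2 (by linarith)) ?_ n
    rw [inv_le_comm₀ (by linarith) (by norm_num)]; linarith
  have step3 : ∀ z, ∫⁻ t, Φ t z ∂I ≤ ENNReal.ofReal (20 * exp 1 / l) *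
      (ENNReal.ofReal (p z) * ‖fderiv ℝ f z‖ₑ ^ 2) := by
    intro z
    have hm1 : Measurable fun t => ENNReal.ofReal (W t z) :=
      (hWm.comp (f := fun t => (t, z)) (by fun_prop)).ennreal_ofReal
    simp only [hΦ]
    rw [lintegral_const_mul _ hm1, mul_comm]
    refine mul_le_mul_left ?_ _
    have e1 : ∀ t, ENNReal.ofReal (W t z) = ENNReal.ofReal (2 * exp 1) *
        (ENNReal.ofReal (‖z - x₀‖ * exp (-(l / 2 * t * ‖z - x₀‖))) + ENNReal.ofReal (16 / l)) := by
      intro t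
      rw [← ENNReal.ofReal_add (by positivity) (by positivity), ← ENNReal.ofReal_mul (by positivity)]
    simp only [e1]
    rw [lintegral_const_mul _ (by fun_prop), lintegral_add_left (by fun_prop)]
    have e2 := lintegral_mul_exp_neg_le (b := l / 2) (by positivity) (norm_nonneg (z - x₀))
    have e3 : ∫⁻ _, ENNReal.ofReal (16 / l) ∂I = ENNReal.ofReal (8 / l) := by
      rw [lintegral_const, hI, Measure.restrict_apply_univ, Real.volume_Ioo,
        ← ENNReal.ofReal_mul (by positivity)]
      congr 1; ring
    rw [e3]
    calc _ ≤ ENNReal.ofReal (2 * exp 1) * (ENNReal.ofReal (1 / (l / 2)) + ENNReal.ofReal (8 / l)) := by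
          gcongr
      _ = _ := by
          rw [← ENNReal.ofReal_add (by positivity) (by positivity),
            ← ENNReal.ofReal_mul (by positivity)]
          congr 1; field_simp; norm_num
  have hPg : Measurable fun z => ENNReal.ofReal (p z) * ‖fderiv ℝ f z‖ₑ ^ 2 :=
    hp.ennreal_ofReal.mul (hgm.pow_const 2)
  have hΦ1 : Measurable fun q : EuclideanSpace ℝ (Fin n) × ℝ => Φ q.2 ((1 - q.2) • q.1 + q.2 • y) :=
    hΦm.comp (f := fun q : EuclideanSpace ℝ (Fin n) × ℝ => (q.2, (1 - q.2) • q.1 + q.2 • y)) (by fun_prop)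
  calc _ ≤ ∫⁻ x, ENNReal.ofReal (8 / l) * ENNReal.ofReal G *
        ∫⁻ t, Φ t ((1 - t) • x + t • y) ∂I := lintegral_mono_ae step1
    _ = ENNReal.ofReal (8 / l) * ENNReal.ofReal G *
        ∫⁻ x, ∫⁻ t, Φ t ((1 - t) • x + t • y) ∂I :=
        lintegral_const_mul _ hΦ1.lintegral_prod_right'
    _ = ENNReal.ofReal (8 / l) * ENNReal.ofReal G *
        ∫⁻ t, (∫⁻ x, Φ t ((1 - t) • x + t • y)) ∂I := by
        rw [lintegral_lintegral_swap hΦ1.aemeasurable]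
    _ ≤ ENNReal.ofReal (8 / l) * ENNReal.ofReal G *
        ∫⁻ t, ENNReal.ofReal (2 ^ n) * (∫⁻ z, Φ t z) ∂I :=
        mul_le_mul_right (lintegral_mono_ae step2) _
    _ = ENNReal.ofReal (8 / l) * ENNReal.ofReal G *
        (ENNReal.ofReal (2 ^ n) * ∫⁻ z, ∫⁻ t, Φ t z ∂I) := by
        rw [lintegral_const_mul _ hΦm.lintegral_prod_right',
          lintegral_lintegral_swap hΦm.aemeasurable]
    _ ≤ ENNReal.ofReal (8 / l) * ENNReal.ofReal G *
        (ENNReal.ofReal (2 ^ n) * ∫⁻ z, ENNReal.ofReal (20 * exp 1 / l) *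
      (ENNReal.ofReal (p z) * ‖fderiv ℝ f z‖ₑ ^ 2)) := by
        gcongr with z; exact step3 z
    _ = (ENNReal.ofReal (8 / l) * ENNReal.ofReal (2 ^ n) * ENNReal.ofReal (20 * exp 1 / l)) *
        (∫⁻ z, ENNReal.ofReal (p z) * ‖fderiv ℝ f z‖ₑ ^ 2) * ENNReal.ofReal G := by
        rw [lintegral_const_mul _ hPg]; ring
    _ = _ := by
        rw [← ENNReal.ofReal_mul (by positivity), ← ENNReal.ofReal_mul (by positivity)]
        congr 3; field_simp; ring

/-- A bound, depending only on the dimension, for the Poincaré constants of isotropic log-concave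
measures. -/
def poincareBound (n : ℕ) : ℝ := 1280 * exp 1 * 8 ^ n * decayScale n ^ 2

theorem poincareBound_pos (n : ℕ) : 0 < poincareBound n := by
  have := decayScale_pos n
  unfold poincareBound; positivity

/-- The Poincaré inequality in the form of a double integral: the increment from `x` to `y` is
split at the midpoint, and the two halves are equal by symmetry. -/
theorem IsLogConcaveDensity.lintegral_lintegral_sub_sq_le {n : ℕ}
    {p : EuclideanSpace ℝ (Fin n) → ℝ} (h : IsLogConcaveDensity p) (hp : Measurable p)
    (h1 : ∫⁻ x, ENNReal.ofReal (p x) = 1)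
    (h2 : ∫⁻ x, ENNReal.ofReal (‖x‖ ^ 2) * ENNReal.ofReal (p x) ≤ ENNReal.ofReal n)
    {f : EuclideanSpace ℝ (Fin n) → ℝ} (hf : LocallyLipschitz f) :
    ∫⁻ y, ∫⁻ x, ENNReal.ofReal (p x) * ENNReal.ofReal (p y) * ‖f x - f y‖ₑ ^ 2 ≤
      ENNReal.ofReal (poincareBound n) *
        ∫⁻ z, ENNReal.ofReal (p z) * ‖fderiv ℝ f z‖ₑ ^ 2 := by
  obtain ⟨M, x₀, hM, hpM, hx₀, hdec⟩ := h.exists_decay hp h1 h2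
  have hρ := decayScale_pos n
  have hfc := hf.continuous
  set l := (decayScale n)⁻¹ with hl
  have hl0 : 0 < l := inv_pos.2 hρ
  have hdec' : ∀ x, p x ≤ M * exp (1 - l * ‖x - x₀‖) := by
    intro x; convert hdec x using 4; rw [hl]; field_simp
  set T : EuclideanSpace ℝ (Fin n) → EuclideanSpace ℝ (Fin n) → ℝ≥0∞ := fun x y =>
    ENNReal.ofReal (p x) * ENNReal.ofReal (p y) *
        ‖f x - f ((1 / 2 : ℝ) • x + (1 / 2 : ℝ) • y)‖ₑ ^ 2 with hT
  have hTm : Measurable fun q : EuclideanSpace ℝ (Fin n) × EuclideanSpace ℝ (Fin n) =>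
      T q.1 q.2 := by rw [hT]; fun_prop
  set D := ∫⁻ z, ENNReal.ofReal (p z) * ‖fderiv ℝ f z‖ₑ ^ 2
  have hI : ∫⁻ y, ∫⁻ x, T x y ≤ ENNReal.ofReal (poincareBound n / 4) * D := by
    calc _ ≤ ∫⁻ y, ENNReal.ofReal (160 * exp 1 * 2 ^ n / l ^ 2) * D *
          ENNReal.ofReal (2 * p ((1 / 4 : ℝ) • y + (3 / 4 : ℝ) • x₀)) :=
          lintegral_mono fun y => h.lintegral_midpoint_le hp hM hl0 hpM hx₀ hdec' hf y
      _ = ENNReal.ofReal (160 * exp 1 * 2 ^ n / l ^ 2) * D * ENNReal.ofReal (2 * 4 ^ n) := by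
          rw [lintegral_const_mul _ (by fun_prop)]
          congr 1
          rw [lintegral_comp_smul_add (fun z => ENNReal.ofReal (2 * p z)) (by fun_prop)
            (s := 1 / 4) (by norm_num)]
          simp_rw [ENNReal.ofReal_mul (zero_le_two : (0 : ℝ) ≤ 2)]
          rw [lintegral_const_mul _ (by fun_prop), h1, mul_one, mul_comm]
          congr 2
          rw [← inv_pow]; norm_num
      _ = _ := by
          rw [mul_right_comm, ← ENNReal.ofReal_mul (by positivity)]
          congr 2
          rw [poincareBound, hl, show (8 : ℝ) ^ n = 2 ^ n * 4 ^ n by rw [← mul_pow]; norm_num]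
          field_simp
          ring
  have hpt : ∀ x y, ENNReal.ofReal (p x) * ENNReal.ofReal (p y) * ‖f x - f y‖ₑ ^ 2 ≤
      2 * T x y + 2 * T y x := by
    intro x y
    have e : ‖f x - f y‖ₑ ^ 2 ≤ 2 * ‖f x - f ((1 / 2 : ℝ) • x + (1 / 2 : ℝ) • y)‖ₑ ^ 2 +
        2 * ‖f y - f ((1 / 2 : ℝ) • y + (1 / 2 : ℝ) • x)‖ₑ ^ 2 := by
      rw [add_comm ((1 / 2 : ℝ) • y)]
      generalize f ((1 / 2 : ℝ) • x + (1 / 2 : ℝ) • y) = m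
      simp only [← ofReal_norm, Real.norm_eq_abs]
      rw [← ENNReal.ofReal_pow (by positivity), ← ENNReal.ofReal_pow (by positivity),
        ← ENNReal.ofReal_pow (by positivity), ← ENNReal.ofReal_ofNat,
        ← ENNReal.ofReal_mul (by positivity), ← ENNReal.ofReal_mul (by positivity),
        ← ENNReal.ofReal_add (by positivity) (by positivity)]
      apply ENNReal.ofReal_le_ofReal
      simp only [sq_abs]
      nlinarith [sq_nonneg ((f x - m) + (f y - m))]
    calc _ ≤ ENNReal.ofReal (p x) * ENNReal.ofReal (p y) *
        (2 * ‖f x - f ((1 / 2 : ℝ) • x + (1 / 2 : ℝ) • y)‖ₑ ^ 2 +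
        2 * ‖f y - f ((1 / 2 : ℝ) • y + (1 / 2 : ℝ) • x)‖ₑ ^ 2) := by gcongr
      _ = _ := by simp only [hT]; ring
  have hTm2 : Measurable fun q : EuclideanSpace ℝ (Fin n) × EuclideanSpace ℝ (Fin n) =>
      T q.2 q.1 := hTm.comp measurable_swap
  calc _ ≤ ∫⁻ y, ∫⁻ x, (2 * T x y + 2 * T y x) :=
        lintegral_mono fun y => lintegral_mono fun x => hpt x y
    _ = ∫⁻ y, (2 * (∫⁻ x, T x y) + 2 * ∫⁻ x, T y x) := by
        congr 1; ext y
        have m1 : Measurable fun x => T x y := hTm.comp (f := fun x => (x, y)) (by fun_prop)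
        have m2 : Measurable fun x => T y x := hTm.comp (f := fun x => (y, x)) (by fun_prop)
        rw [lintegral_add_left (m1.const_mul _), lintegral_const_mul _ m1,
          lintegral_const_mul _ m2]
    _ = 2 * (∫⁻ y, ∫⁻ x, T x y) + 2 * ∫⁻ y, ∫⁻ x, T y x := by
        have m1 : Measurable fun y => ∫⁻ x, T x y := hTm2.lintegral_prod_right'
        have m2 : Measurable fun y => ∫⁻ x, T y x := hTm.lintegral_prod_right'
        rw [lintegral_add_left (m1.const_mul _), lintegral_const_mul _ m1,
          lintegral_const_mul _ m2]
    _ = 2 * (∫⁻ y, ∫⁻ x, T x y) + 2 * ∫⁻ y, ∫⁻ x, T x y := by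
        congr 2
        exact lintegral_lintegral_swap hTm.aemeasurable
    _ = 4 * (∫⁻ y, ∫⁻ x, T x y) := by ring
    _ ≤ 4 * (ENNReal.ofReal (poincareBound n / 4) * D) := by gcongr
    _ = _ := by
        rw [← mul_assoc, ← ENNReal.ofReal_ofNat, ← ENNReal.ofReal_mul (by norm_num)]
        congr 2; ring

/-! ### The KLS constant is finite -/

theorem norm_gradient_eq {n : ℕ} (f : EuclideanSpace ℝ (Fin n) → ℝ)
    (x : EuclideanSpace ℝ (Fin n)) : ‖gradient f x‖ = ‖fderiv ℝ f x‖ := by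
  rw [gradient, LinearIsometryEquiv.norm_map]

theorem IsIsotropicMeasure.integrable_sq {n : ℕ} {μ : Measure (EuclideanSpace ℝ (Fin n))}
    (h : IsIsotropicMeasure μ) (i : Fin n) : Integrable (fun x => x i ^ 2) μ := by
  have e := h.2 i i
  simp only [if_true, ← sq] at e
  by_contra hcon
  rw [integral_undef hcon] at e
  exact zero_ne_one e

theorem IsIsotropicMeasure.memLp {n : ℕ} {μ : Measure (EuclideanSpace ℝ (Fin n))}
    (h : IsIsotropicMeasure μ) (i : Fin n) : MemLp (fun x => x i) 2 μ :=
  (memLp_two_iff_integrable_sq (by fun_prop)).2 (h.integrable_sq i)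

theorem IsIsotropicMeasure.integrable_norm_sq {n : ℕ} {μ : Measure (EuclideanSpace ℝ (Fin n))}
    (h : IsIsotropicMeasure μ) : Integrable (fun x => ‖x‖ ^ 2) μ := by
  simp only [EuclideanSpace.real_norm_sq_eq]
  exact integrable_finsetSum _ fun i _ => h.integrable_sq i

theorem IsIsotropicMeasure.integral_norm_sq {n : ℕ} {μ : Measure (EuclideanSpace ℝ (Fin n))}
    (h : IsIsotropicMeasure μ) : ∫ x, ‖x‖ ^ 2 ∂μ = n := by
  simp only [EuclideanSpace.real_norm_sq_eq]
  rw [integral_finsetSum _ fun i _ => h.integrable_sq i]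
  have : ∀ i : Fin n, ∫ x : EuclideanSpace ℝ (Fin n), x i ^ 2 ∂μ = 1 := by
    intro i
    have e := h.2 i i
    simpa only [if_true, ← sq] using e
  simp [this]

/-- The Poincaré inequality, with a constant depending only on the dimension, for isotropic
log-concave measures. -/
theorem poincare_of_integrable {n : ℕ} {μ : Measure (EuclideanSpace ℝ (Fin n))}
    [IsProbabilityMeasure μ] (hlc : IsLogConcaveMeasure μ) (hiso : IsIsotropicMeasure μ)
    {f : EuclideanSpace ℝ (Fin n) → ℝ} (hf : LocallyLipschitz f)
    (hv : Integrable (fun x => (f x - ∫ y, f y ∂μ) ^ 2) μ)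
    (hg : Integrable (fun x => ‖gradient f x‖ ^ 2) μ) :
    ∫ x, (f x - ∫ y, f y ∂μ) ^ 2 ∂μ ≤ poincareBound n * ∫ x, ‖gradient f x‖ ^ 2 ∂μ := by
  obtain ⟨p, hp, hpl, hμ⟩ := hlc
  have hfc := hf.continuous
  have conv : ∀ F : EuclideanSpace ℝ (Fin n) → ℝ≥0∞, Measurable F →
      ∫⁻ x, F x ∂μ = ∫⁻ x, ENNReal.ofReal (p x) * F x := by
    intro F hF
    rw [hμ, lintegral_withDensity_eq_lintegral_mul _ (by fun_prop) hF]
    rfl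
  have h1 : ∫⁻ x, ENNReal.ofReal (p x) = 1 := by
    have := conv (fun _ => 1) measurable_const
    simpa using this.symm
  have h2 : ∫⁻ x, ENNReal.ofReal (‖x‖ ^ 2) * ENNReal.ofReal (p x) ≤ ENNReal.ofReal n := by
    have e1 := conv (fun x => ENNReal.ofReal (‖x‖ ^ 2)) (by fun_prop)
    simp_rw [mul_comm (ENNReal.ofReal (‖_‖ ^ 2))]
    rw [← e1, ← ofReal_integral_eq_lintegral_ofReal hiso.integrable_norm_sq
      (Filter.Eventually.of_forall fun x => by positivity), hiso.integral_norm_sq]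
  set c := ∫ y, f y ∂μ with hc
  have hmem : MemLp (fun x => f x - c) 2 μ :=
    (memLp_two_iff_integrable_sq (by fun_prop)).2 hv
  have hInt : Integrable (fun x => f x - c) μ := hmem.integrable (by norm_num)
  have hfint : Integrable f μ := by
    refine (hInt.add (integrable_const c)).congr (Filter.Eventually.of_forall fun x => ?_)
    simp
  have hmean : ∫ x, (f x - c) ∂μ = 0 := by
    rw [integral_sub hfint (integrable_const _)]; simp [hc]
  have hptw : ∀ a : ℝ, ENNReal.ofReal ((a - c) ^ 2) ≤ ∫⁻ y, ‖f y - a‖ₑ ^ 2 ∂μ := by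
    intro a
    have e1 : ∀ y, ‖f y - a‖ₑ ^ 2 =
        ENNReal.ofReal ((a - c) ^ 2 - 2 * (a - c) * (f y - c) + (f y - c) ^ 2) := by
      intro y
      rw [← ofReal_norm, ← ENNReal.ofReal_pow (by positivity), Real.norm_eq_abs, sq_abs]
      congr 1; ring
    have i1 : Integrable (fun y => (a - c) ^ 2 - 2 * (a - c) * (f y - c)) μ :=
      (integrable_const _).sub (hInt.const_mul _)
    have i2 : Integrable (fun y => (a - c) ^ 2 - 2 * (a - c) * (f y - c) + (f y - c) ^ 2) μ :=
      i1.add hv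
    simp only [e1]
    rw [← ofReal_integral_eq_lintegral_ofReal i2
      (Filter.Eventually.of_forall fun y => by
        have : 0 ≤ (a - f y) ^ 2 := sq_nonneg _
        simp only [Pi.zero_apply]; nlinarith)]
    apply ENNReal.ofReal_le_ofReal
    rw [integral_add i1 hv, integral_sub (integrable_const _) (hInt.const_mul _),
      integral_const_mul, hmean]
    have : 0 ≤ ∫ x, (f x - c) ^ 2 ∂μ := integral_nonneg fun x => sq_nonneg _
    simp only [integral_const, probReal_univ, smul_eq_mul]
    linarith
  have hgm : Measurable fun z => ‖fderiv ℝ f z‖ₑ := (measurable_fderiv ℝ f).enorm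
  have key : ENNReal.ofReal (∫ x, (f x - c) ^ 2 ∂μ) ≤
      ENNReal.ofReal (poincareBound n * ∫ x, ‖gradient f x‖ ^ 2 ∂μ) := by
    calc ENNReal.ofReal (∫ x, (f x - c) ^ 2 ∂μ) = ∫⁻ x, ENNReal.ofReal ((f x - c) ^ 2) ∂μ :=
          ofReal_integral_eq_lintegral_ofReal hv
            (Filter.Eventually.of_forall fun x => sq_nonneg _)
      _ ≤ ∫⁻ x, ∫⁻ y, ‖f y - f x‖ₑ ^ 2 ∂μ ∂μ := lintegral_mono fun x => hptw (f x)
      _ = ∫⁻ x, ENNReal.ofReal (p x) * ∫⁻ y, ENNReal.ofReal (p y) * ‖f y - f x‖ₑ ^ 2 := by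
          rw [conv _ (Measurable.lintegral_prod_right'
            (f := fun q : EuclideanSpace ℝ (Fin n) × EuclideanSpace ℝ (Fin n) =>
              ‖f q.2 - f q.1‖ₑ ^ 2) (by fun_prop))]
          congr 1; ext x
          rw [conv _ (by fun_prop)]
      _ = ∫⁻ y, ∫⁻ x, ENNReal.ofReal (p x) * ENNReal.ofReal (p y) * ‖f x - f y‖ₑ ^ 2 := by
          congr 1; ext x
          rw [← lintegral_const_mul _ (by fun_prop)]
          congr 1; ext y; ring
      _ ≤ _ := hpl.lintegral_lintegral_sub_sq_le hp h1 h2 hf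
      _ = ENNReal.ofReal (poincareBound n) * ∫⁻ z, ENNReal.ofReal (‖gradient f z‖ ^ 2) ∂μ := by
          rw [← conv _ (hgm.pow_const 2)]
          congr 2; ext z
          rw [norm_gradient_eq, ENNReal.ofReal_pow (norm_nonneg _), ofReal_norm]
      _ = _ := by
          rw [ENNReal.ofReal_mul (poincareBound_pos n).le, ofReal_integral_eq_lintegral_ofReal hg
            (Filter.Eventually.of_forall fun x => sq_nonneg _)]
  have hnn : 0 ≤ poincareBound n * ∫ x, ‖gradient f x‖ ^ 2 ∂μ :=
    mul_nonneg (poincareBound_pos n).le (integral_nonneg fun x => sq_nonneg _)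
  exact (ENNReal.ofReal_le_ofReal_iff hnn).1 key

/-- If no constant is admissible then `poincareConst μ` is `sInf ∅ = 0`. If some constant is
admissible, it forces the variance to vanish whenever `‖∇f‖²` fails to be integrable (its
integral then being `0`), so that `poincareBound n` is admissible as well. -/
theorem poincareConst_le {n : ℕ} {μ : Measure (EuclideanSpace ℝ (Fin n))}
    [IsProbabilityMeasure μ] (hlc : IsLogConcaveMeasure μ) (hiso : IsIsotropicMeasure μ) :
    poincareConst μ ≤ poincareBound n := by
  unfold poincareConst
  rcases Set.eq_empty_or_nonempty {A : ℝ | 0 ≤ A ∧ ∀ f : EuclideanSpace ℝ (Fin n) → ℝ,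
    LocallyLipschitz f →
      ∫ x, (f x - ∫ y, f y ∂μ) ^ 2 ∂μ ≤ A * ∫ x, ‖gradient f x‖ ^ 2 ∂μ} with he | ⟨A, hA0, hA⟩
  · rw [he, Real.sInf_empty]; exact (poincareBound_pos n).le
  · refine csInf_le ⟨0, fun B hB => hB.1⟩ ⟨(poincareBound_pos n).le, fun f hf => ?_⟩
    by_cases hg : Integrable (fun x => ‖gradient f x‖ ^ 2) μ
    · by_cases hv : Integrable (fun x => (f x - ∫ y, f y ∂μ) ^ 2) μ
      · exact poincare_of_integrable hlc hiso hf hv hg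
      · rw [integral_undef hv]
        exact mul_nonneg (poincareBound_pos n).le (integral_nonneg fun x => sq_nonneg _)
    · have := hA f hf
      rw [integral_undef hg, mul_zero] at this ⊢
      exact this

theorem bddAbove_KLS (n : ℕ) :
    BddAbove {s : ℝ | ∃ μ : Measure (EuclideanSpace ℝ (Fin n)), IsProbabilityMeasure μ ∧
      IsLogConcaveMeasure μ ∧ IsIsotropicMeasure μ ∧ s = Real.sqrt (poincareConst μ)} := by
  refine ⟨√(poincareBound n), ?_⟩
  rintro _ ⟨μ, hμ, hlc, hiso, rfl⟩
  exact Real.sqrt_le_sqrt (poincareConst_le hlc hiso)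

theorem KLSConst_nonneg (n : ℕ) : 0 ≤ KLSConst n := by
  refine Real.sSup_nonneg ?_
  rintro _ ⟨μ, hμ, hlc, hiso, rfl⟩
  exact Real.sqrt_nonneg _

theorem integrable_of_compact_support {n : ℕ} {μ : Measure (EuclideanSpace ℝ (Fin n))}
    [IsProbabilityMeasure μ] {R : ℝ} (hR : ∀ᵐ x ∂μ, ‖x‖ ≤ R)
    {g : EuclideanSpace ℝ (Fin n) → ℝ} (hg : Continuous g) : Integrable g μ := by
  obtain ⟨C, hC⟩ := (isCompact_closedBall (0 : EuclideanSpace ℝ (Fin n)) R).exists_bound_of_continuousOn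
    hg.continuousOn
  refine Integrable.of_bound hg.aestronglyMeasurable C ?_
  filter_upwards [hR] with x hx
  exact hC x (by simpa using hx)

/-- For a compactly supported measure every locally Lipschitz function has finite variance and
finite Dirichlet energy, so the Poincaré inequality holds with the KLS constant. -/
theorem variance_le_KLSConst {n : ℕ} {μ : Measure (EuclideanSpace ℝ (Fin n))}
    [IsProbabilityMeasure μ] (hlc : IsLogConcaveMeasure μ) (hiso : IsIsotropicMeasure μ)
    {R : ℝ} (hR : ∀ᵐ x ∂μ, ‖x‖ ≤ R)
    {f : EuclideanSpace ℝ (Fin n) → ℝ} (hf : LocallyLipschitz f) :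
    ∫ x, (f x - ∫ y, f y ∂μ) ^ 2 ∂μ ≤ KLSConst n ^ 2 * ∫ x, ‖gradient f x‖ ^ 2 ∂μ := by
  have hmem : poincareBound n ∈ {A : ℝ | 0 ≤ A ∧ ∀ f : EuclideanSpace ℝ (Fin n) → ℝ,
      LocallyLipschitz f →
        ∫ x, (f x - ∫ y, f y ∂μ) ^ 2 ∂μ ≤ A * ∫ x, ‖gradient f x‖ ^ 2 ∂μ} := by
    refine ⟨(poincareBound_pos n).le, fun f hf => poincare_of_integrable hlc hiso hf ?_ ?_⟩
    · have := hf.continuous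
      exact integrable_of_compact_support hR (by fun_prop)
    · obtain ⟨K, hK⟩ := (hf.locallyLipschitzOn
        (s := Metric.closedBall 0 (R + 1))).exists_lipschitzOnWith_of_compact
        (isCompact_closedBall (0 : EuclideanSpace ℝ (Fin n)) (R + 1))
      simp only [norm_gradient_eq]
      refine Integrable.of_bound
        ((measurable_fderiv ℝ f).norm.pow_const 2).aestronglyMeasurable ((K : ℝ) ^ 2) ?_
      filter_upwards [hR] with x hx
      rw [norm_pow, norm_norm]
      gcongr
      refine norm_fderiv_le_of_lipschitzOn ℝ (s := Metric.closedBall 0 (R + 1)) ?_ hK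
      refine Filter.mem_of_superset (Metric.ball_mem_nhds x one_pos) ?_
      refine (Metric.ball_subset_closedBall).trans (Metric.closedBall_subset_closedBall' ?_)
      simp only [dist_zero_right]; linarith
  have hpc : ∫ x, (f x - ∫ y, f y ∂μ) ^ 2 ∂μ ≤
      poincareConst μ * ∫ x, ‖gradient f x‖ ^ 2 ∂μ := by
    have hD : 0 ≤ ∫ x, ‖gradient f x‖ ^ 2 ∂μ := integral_nonneg fun x => sq_nonneg _
    rcases hD.eq_or_lt with h0 | hpos
    · have := hmem.2 f hf
      rw [← h0, mul_zero] at this ⊢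
      exact this
    · rw [← div_le_iff₀ hpos]
      refine le_csInf ⟨_, hmem⟩ fun A hA => ?_
      rw [div_le_iff₀ hpos]
      exact hA.2 f hf
  refine hpc.trans (mul_le_mul_of_nonneg_right ?_ (integral_nonneg fun x => sq_nonneg _))
  have h0 : 0 ≤ poincareConst μ := Real.sInf_nonneg fun A hA => hA.1
  calc poincareConst μ = √(poincareConst μ) ^ 2 := (Real.sq_sqrt h0).symm
    _ ≤ KLSConst n ^ 2 := by
      gcongr
      exact le_csSup (bddAbove_KLS n) ⟨μ, inferInstance, hlc, hiso, rfl⟩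

/-! ### Affine changes of variables -/

theorem lintegral_comp_affine {n : ℕ}
    {L : EuclideanSpace ℝ (Fin n) →ₗ[ℝ] EuclideanSpace ℝ (Fin n)} (hL : LinearMap.det L ≠ 0)
    (b : EuclideanSpace ℝ (Fin n)) {G : EuclideanSpace ℝ (Fin n) → ℝ≥0∞} (hG : Measurable G) :
    ∫⁻ y, G (L y + b) = ENNReal.ofReal |(LinearMap.det L)⁻¹| * ∫⁻ x, G x := by
  have hLm : Measurable L := L.continuous_of_finiteDimensional.measurable
  have e1 := Measure.map_linearMap_addHaar_eq_smul_addHaar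
    (volume : Measure (EuclideanSpace ℝ (Fin n))) hL
  have e2 : ∫⁻ y, G (L y + b) = ∫⁻ z, G (z + b) ∂(volume.map L) := by
    rw [lintegral_map (by fun_prop) hLm]
  rw [e2, e1, lintegral_smul_measure, lintegral_add_right_eq_self, smul_eq_mul]

/-- The law of `L⁻¹ (X - b)` is log-concave when the law of `X` is. -/
theorem IsLogConcaveMeasure.map_affine {n : ℕ} {μ : Measure (EuclideanSpace ℝ (Fin n))}
    (h : IsLogConcaveMeasure μ)
    {L C : EuclideanSpace ℝ (Fin n) →ₗ[ℝ] EuclideanSpace ℝ (Fin n)} (hCL : C * L = 1)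
    (b : EuclideanSpace ℝ (Fin n)) : IsLogConcaveMeasure (μ.map fun x => C (x - b)) := by
  obtain ⟨p, hp, ⟨h0, hl⟩, rfl⟩ := h
  have hdet : LinearMap.det L ≠ 0 := by
    intro h0
    have := congrArg LinearMap.det hCL
    rw [map_mul, h0, mul_zero, map_one] at this
    exact zero_ne_one this
  have hLm : Measurable L := L.continuous_of_finiteDimensional.measurable
  have hCm : Measurable C := C.continuous_of_finiteDimensional.measurable
  have hCL' : ∀ y, C (L y) = y := fun y => by
    rw [← Module.End.mul_apply, hCL, Module.End.one_apply]
  set d := |LinearMap.det L| with hd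
  have d0 : 0 ≤ d := abs_nonneg _
  refine ⟨fun y => d * p (L y + b), by fun_prop, ⟨fun y => mul_nonneg d0 (h0 _), ?_⟩, ?_⟩
  · intro x y t ht ht1
    have key := hl (L x + b) (L y + b) t ht ht1
    rw [Real.mul_rpow d0 (h0 _), Real.mul_rpow d0 (h0 _)]
    have e1 : d ^ t * d ^ (1 - t) = d := by
      rw [← Real.rpow_add (abs_pos.2 hdet)]; simp [hd]
    have e2 : t • (L x + b) + (1 - t) • (L y + b) = L (t • x + (1 - t) • y) + b := by
      rw [map_add, map_smul, map_smul]; module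
    rw [e2] at key
    calc _ = (d ^ t * d ^ (1 - t)) * (p (L x + b) ^ t * p (L y + b) ^ (1 - t)) := by ring
      _ ≤ _ := by rw [e1]; exact mul_le_mul_of_nonneg_left key d0
  · ext s hs
    have hTm : Measurable fun x => C (x - b) := by fun_prop
    rw [Measure.map_apply hTm hs, withDensity_apply _ (hTm hs), withDensity_apply _ hs,
      ← lintegral_indicator (hTm hs), ← lintegral_indicator hs]
    have e3 := lintegral_comp_affine hdet b
      (G := ((fun x => C (x - b)) ⁻¹' s).indicator fun x => ENNReal.ofReal (p x))
      (Measurable.indicator (by fun_prop) (hTm hs))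
    have e4 : ∀ y, s.indicator (fun y => ENNReal.ofReal (d * p (L y + b))) y = ENNReal.ofReal d *
        ((fun x => C (x - b)) ⁻¹' s).indicator (fun x => ENNReal.ofReal (p x)) (L y + b) := by
      intro y
      by_cases hy : y ∈ s
      · rw [Set.indicator_of_mem hy, Set.indicator_of_mem (by simpa [hCL'] using hy),
          ENNReal.ofReal_mul d0]
      · rw [Set.indicator_of_notMem hy, Set.indicator_of_notMem (by simpa [hCL'] using hy),
          mul_zero]
    simp only [e4]
    rw [lintegral_const_mul _ (by
      exact (Measurable.indicator (by fun_prop) (hTm hs)).comp (by fun_prop)), e3, ← mul_assoc,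
      ← ENNReal.ofReal_mul d0, hd, ← abs_mul, mul_inv_cancel₀ hdet]
    simp

/-- The covariance matrix of a measure on `ℝⁿ`. -/
def covMatrix {n : ℕ} (μ : Measure (EuclideanSpace ℝ (Fin n))) : Matrix (Fin n) (Fin n) ℝ :=
  Matrix.of fun i j => ∫ x, (x i - ∫ y, y i ∂μ) * (x j - ∫ y, y j ∂μ) ∂μ

open scoped Matrix in
theorem posSemidef_covMatrix {n : ℕ} {μ : Measure (EuclideanSpace ℝ (Fin n))}
    [IsProbabilityMeasure μ] {R : ℝ} (hR : ∀ᵐ x ∂μ, ‖x‖ ≤ R) : (covMatrix μ).PosSemidef := by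
  refine Matrix.PosSemidef.of_dotProduct_mulVec_nonneg ?_ fun v => ?_
  · ext i j
    simp only [covMatrix, Matrix.conjTranspose_apply, Matrix.of_apply, star_trivial]
    congr 1; ext x; ring
  · have : star v ⬝ᵥ covMatrix μ *ᵥ v = ∫ x, (∑ i, v i * (x i - ∫ y, y i ∂μ)) ^ 2 ∂μ := by
      simp only [sq, Finset.sum_mul_sum]
      rw [integral_finsetSum _ fun i _ => integrable_of_compact_support hR (by fun_prop)]
      simp only [dotProduct, Matrix.mulVec, Finset.mul_sum]
      refine Finset.sum_congr rfl fun i _ => ?_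
      rw [integral_finsetSum _ fun j _ => integrable_of_compact_support hR (by fun_prop)]
      refine Finset.sum_congr rfl fun j _ => ?_
      simp only [covMatrix, Matrix.of_apply, Pi.star_apply, star_trivial]
      rw [← mul_assoc, mul_right_comm, ← integral_const_mul]
      congr 1; ext x; ring
    rw [this]
    exact integral_nonneg fun x => sq_nonneg _

/-- If `C Σ Cᵀ = 1`, where `Σ` is the covariance of `X`, then `C (X - E X)` is isotropic. -/
theorem isIsotropicMeasure_map {n : ℕ} {μ : Measure (EuclideanSpace ℝ (Fin n))}
    [IsProbabilityMeasure μ] {R : ℝ} (hR : ∀ᵐ x ∂μ, ‖x‖ ≤ R) {C : Matrix (Fin n) (Fin n) ℝ}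
    (hC : C * covMatrix μ * C.transpose = 1) {b : EuclideanSpace ℝ (Fin n)}
    (hb : ∀ i, b i = ∫ x, x i ∂μ) :
    IsIsotropicMeasure (μ.map fun x => Matrix.toEuclideanCLM (𝕜 := ℝ) C (x - b)) := by
  have hcoord : ∀ (x : EuclideanSpace ℝ (Fin n)) i,
      Matrix.toEuclideanCLM (𝕜 := ℝ) C (x - b) i = ∑ k, C i k * (x k - b k) := by
    intro x i
    rw [Matrix.ofLp_toEuclideanCLM]
    simp [Matrix.mulVec, dotProduct]
  have hT : Measurable fun x : EuclideanSpace ℝ (Fin n) =>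
    Matrix.toEuclideanCLM (𝕜 := ℝ) C (x - b) := by fun_prop
  constructor
  · intro i
    rw [integral_map hT.aemeasurable (by fun_prop)]
    simp only [hcoord]
    rw [integral_finsetSum _ fun k _ => integrable_of_compact_support hR (by fun_prop)]
    refine Finset.sum_eq_zero fun k _ => ?_
    rw [integral_const_mul, integral_sub (integrable_of_compact_support hR (by fun_prop))
      (integrable_const _), ← hb]
    simp
  · intro i j
    rw [integral_map hT.aemeasurable (by fun_prop)]
    simp only [hcoord, Finset.sum_mul_sum]
    rw [integral_finsetSum _ fun k _ => integrable_of_compact_support hR (by fun_prop)]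
    have e := congrFun (congrFun hC i) j
    rw [Matrix.one_apply] at e
    rw [← e, Matrix.mul_assoc, Matrix.mul_apply]
    refine Finset.sum_congr rfl fun k _ => ?_
    rw [integral_finsetSum _ fun l _ => integrable_of_compact_support hR (by fun_prop),
      Matrix.mul_apply, Finset.mul_sum]
    refine Finset.sum_congr rfl fun l _ => ?_
    simp only [covMatrix, Matrix.of_apply, Matrix.transpose_apply, ← hb]
    rw [← mul_assoc, mul_right_comm, ← integral_const_mul]
    congr 1; ext x; ring

open scoped Matrix.Norms.L2Operator MatrixOrder in
/-- The Poincaré inequality for a compactly supported log-concave measure with invertible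
covariance `Σ`: the isotropic case applied to `Σ^{-1/2} (X - E X)` costs a factor `‖Σ‖`. -/
theorem variance_le_KLSConst_mul_covMatrix {n : ℕ} {μ : Measure (EuclideanSpace ℝ (Fin n))}
    [IsProbabilityMeasure μ] (hlc : IsLogConcaveMeasure μ)
    {R : ℝ} (hR : ∀ᵐ x ∂μ, ‖x‖ ≤ R) (hdet : (covMatrix μ).det ≠ 0)
    {f : EuclideanSpace ℝ (Fin n) → ℝ} (hf : ContDiff ℝ 1 f) :
    ∫ x, (f x - ∫ y, f y ∂μ) ^ 2 ∂μ ≤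
      KLSConst n ^ 2 * ‖covMatrix μ‖ * ∫ x, ‖gradient f x‖ ^ 2 ∂μ := by
  have hps := posSemidef_covMatrix hR
  set A := CFC.sqrt (covMatrix μ) with hA
  have hAA : A * A = covMatrix μ := CFC.sqrt_mul_sqrt_self _ hps.nonneg
  have hAH : A.conjTranspose = A := (CFC.sqrt_nonneg (covMatrix μ)).isSelfAdjoint
  have hAT : A.transpose = A := by
    rw [← Matrix.conjTranspose_eq_transpose_of_trivial, hAH]
  have hnorm : ‖A‖ ^ 2 = ‖covMatrix μ‖ := by
    rw [sq, ← Matrix.l2_opNorm_conjTranspose_mul_self, hAH, hAA]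
  have hAdet : IsUnit A.det := by
    rw [isUnit_iff_ne_zero]
    intro h0
    rw [← hAA, Matrix.det_mul, h0, mul_zero] at hdet
    exact hdet rfl
  set b : EuclideanSpace ℝ (Fin n) := WithLp.toLp 2 fun i => ∫ x, x i ∂μ with hb
  set T : EuclideanSpace ℝ (Fin n) → EuclideanSpace ℝ (Fin n) :=
    fun x => Matrix.toEuclideanCLM (𝕜 := ℝ) A⁻¹ (x - b) with hT
  set S : EuclideanSpace ℝ (Fin n) → EuclideanSpace ℝ (Fin n) :=
    fun y => Matrix.toEuclideanCLM (𝕜 := ℝ) A y + b with hS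
  have hST : ∀ x, S (T x) = x := by
    intro x
    simp only [hS, hT]
    rw [← mul_apply_eq_comp, ← map_mul, Matrix.mul_nonsing_inv _ hAdet, map_one]
    simp
  have hTc : Continuous T := by rw [hT]; fun_prop
  have hiso : IsIsotropicMeasure (μ.map T) := by
    refine isIsotropicMeasure_map hR ?_ fun i => rfl
    rw [← hAA, Matrix.transpose_nonsing_inv, hAT, ← Matrix.mul_assoc, Matrix.nonsing_inv_mul _ hAdet,
      Matrix.one_mul, Matrix.mul_nonsing_inv _ hAdet]
  have hlc' : IsLogConcaveMeasure (μ.map T) := by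
    refine hlc.map_affine (L := Matrix.toEuclideanCLM (𝕜 := ℝ) A)
      (C := Matrix.toEuclideanCLM (𝕜 := ℝ) A⁻¹) ?_ b
    ext1 x
    change (Matrix.toEuclideanCLM (𝕜 := ℝ) A⁻¹ * Matrix.toEuclideanCLM (𝕜 := ℝ) A) x = x
    rw [← map_mul, Matrix.nonsing_inv_mul _ hAdet, map_one]
    rfl
  have : IsProbabilityMeasure (μ.map T) := Measure.isProbabilityMeasure_map hTc.aemeasurable
  obtain ⟨R', hR'⟩ : ∃ R', ∀ᵐ y ∂(μ.map T), ‖y‖ ≤ R' := by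
    obtain ⟨R', hR'⟩ := (isCompact_closedBall (0 : EuclideanSpace ℝ (Fin n)) R).exists_bound_of_continuousOn
      hTc.continuousOn
    refine ⟨R', (ae_map_iff hTc.aemeasurable (measurableSet_le (by fun_prop) (by fun_prop))).2 ?_⟩
    filter_upwards [hR] with x hx
    exact hR' x (by simpa using hx)
  have hSd : ContDiff ℝ 1 S := by rw [hS]; fun_prop
  have hfS : ContDiff ℝ 1 (f ∘ S) := hf.comp hSd
  have key := variance_le_KLSConst hlc' hiso hR' hfS.locallyLipschitz
  have hgc : ∀ g : EuclideanSpace ℝ (Fin n) → ℝ, ContDiff ℝ 1 g →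
      Continuous fun x => ‖gradient g x‖ ^ 2 := by
    intro g hg
    simp only [norm_gradient_eq]
    exact (hg.continuous_fderiv one_ne_zero).norm.pow 2
  have hfSc := hfS.continuous
  rw [integral_map hTc.aemeasurable hfSc.aestronglyMeasurable,
    integral_map hTc.aemeasurable (by fun_prop),
    integral_map hTc.aemeasurable (hgc _ hfS).aestronglyMeasurable] at key
  simp only [Function.comp_apply, hST] at key
  refine key.trans ?_
  rw [mul_assoc, ← integral_const_mul ‖covMatrix μ‖]
  refine mul_le_mul_of_nonneg_left ?_ (sq_nonneg _)
  refine integral_mono (integrable_of_compact_support hR ((hgc _ hfS).comp hTc))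
    (integrable_of_compact_support hR (continuous_const.mul (hgc _ hf))) fun x => ?_
  simp only [norm_gradient_eq]
  rw [← hnorm, ← mul_pow]
  gcongr
  have hd : HasFDerivAt S (Matrix.toEuclideanCLM (𝕜 := ℝ) A) (T x) :=
    (Matrix.toEuclideanCLM (𝕜 := ℝ) A).hasFDerivAt.add_const b
  have hd2 : HasFDerivAt f (fderiv ℝ f x) (S (T x)) := by
    rw [hST]; exact (hf.differentiable one_ne_zero x).hasFDerivAt
  rw [(hd2.comp (T x) hd).fderiv, mul_comm]
  exact ContinuousLinearMap.opNorm_comp_le _ _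

/-! ### Truncation to balls -/

theorem IsLogConcaveMeasure.cond {n : ℕ} {μ : Measure (EuclideanSpace ℝ (Fin n))}
    [IsProbabilityMeasure μ] (h : IsLogConcaveMeasure μ) {s : Set (EuclideanSpace ℝ (Fin n))}
    (hs : MeasurableSet s) (hc : Convex ℝ s) (h0 : μ s ≠ 0) :
    IsLogConcaveMeasure (ProbabilityTheory.cond μ s) := by
  obtain ⟨p, hp, ⟨hp0, hl⟩, hμ⟩ := h
  set d := (μ.real s)⁻¹ with hd
  have hpos : 0 < μ.real s := ENNReal.toReal_pos h0 (measure_ne_top _ _)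
  have d0 : 0 < d := inv_pos.2 hpos
  have q0 : ∀ x, 0 ≤ s.indicator (fun y => d * p y) x :=
    fun x => Set.indicator_nonneg (fun y _ => mul_nonneg d0.le (hp0 y)) x
  refine ⟨s.indicator fun x => d * p x, (by fun_prop : Measurable fun x => d * p x).indicator hs,
    ⟨q0, ?_⟩, ?_⟩
  · intro x y t ht ht1
    rcases ht.eq_or_lt with rfl | ht'
    · simp
    rcases ht1.eq_or_lt with rfl | ht1'
    · simp
    by_cases hx : x ∈ s
    · by_cases hy : y ∈ s
      · have hz : t • x + (1 - t) • y ∈ s := hc hx hy ht (by linarith) (by ring)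
        rw [Set.indicator_of_mem hx, Set.indicator_of_mem hy, Set.indicator_of_mem hz,
          Real.mul_rpow d0.le (hp0 _), Real.mul_rpow d0.le (hp0 _)]
        have e1 : d ^ t * d ^ (1 - t) = d := by
          rw [← Real.rpow_add d0]; simp
        calc _ = (d ^ t * d ^ (1 - t)) * (p x ^ t * p y ^ (1 - t)) := by ring
          _ ≤ _ := by rw [e1]; exact mul_le_mul_of_nonneg_left (hl x y t ht ht1) d0.le
      · rw [Set.indicator_of_notMem hy, Real.zero_rpow (by linarith), mul_zero]
        exact q0 _
    · rw [Set.indicator_of_notMem hx, Real.zero_rpow ht'.ne', zero_mul]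
      exact q0 _
  · ext u hu
    rw [ProbabilityTheory.cond_apply hs, withDensity_apply _ hu]
    have e : ∀ x, ENNReal.ofReal (s.indicator (fun y => d * p y) x) =
        ENNReal.ofReal d * s.indicator (fun y => ENNReal.ofReal (p y)) x := by
      intro x
      by_cases hx : x ∈ s
      · rw [Set.indicator_of_mem hx, Set.indicator_of_mem hx, ENNReal.ofReal_mul d0.le]
      · rw [Set.indicator_of_notMem hx, Set.indicator_of_notMem hx]; simp
    simp only [e]
    rw [lintegral_const_mul _ ((by fun_prop : Measurable fun y => ENNReal.ofReal (p y)).indicator hs),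
      lintegral_indicator hs, Measure.restrict_restrict hs]
    congr 1
    · rw [hd, ENNReal.ofReal_inv_of_pos hpos, measureReal_def,
        ENNReal.ofReal_toReal (measure_ne_top _ _)]
    · rw [← withDensity_apply _ (hs.inter hu), ← hμ]

theorem integral_cond {n : ℕ} (μ : Measure (EuclideanSpace ℝ (Fin n)))
    (s : Set (EuclideanSpace ℝ (Fin n))) (g : EuclideanSpace ℝ (Fin n) → ℝ) :
    ∫ x, g x ∂(ProbabilityTheory.cond μ s) = (μ.real s)⁻¹ * ∫ x in s, g x ∂μ := by
  rw [ProbabilityTheory.cond, integral_smul_measure, ENNReal.toReal_inv, smul_eq_mul]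
  rfl

open Filter Topology in
theorem tendsto_integral_closedBall {n : ℕ} {μ : Measure (EuclideanSpace ℝ (Fin n))}
    {g : EuclideanSpace ℝ (Fin n) → ℝ} (hg : Integrable g μ) :
    Tendsto (fun k : ℕ => ∫ x in Metric.closedBall 0 (k : ℝ), g x ∂μ) atTop
      (𝓝 (∫ x, g x ∂μ)) := by
  have hU : (⋃ k : ℕ, Metric.closedBall (0 : EuclideanSpace ℝ (Fin n)) (k : ℝ)) = Set.univ :=
    Metric.iUnion_closedBall_nat 0
  have := tendsto_setIntegral_of_monotone (μ := μ) (f := g)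
    (s := fun k : ℕ => Metric.closedBall (0 : EuclideanSpace ℝ (Fin n)) (k : ℝ))
    (fun k => measurableSet_closedBall)
    (fun i j hij => Metric.closedBall_subset_closedBall (by exact_mod_cast hij))
    (hg.integrableOn)
  rwa [hU, Measure.restrict_univ] at this

open Filter Topology in
theorem tendsto_measureReal_closedBall {n : ℕ} (μ : Measure (EuclideanSpace ℝ (Fin n)))
    [IsProbabilityMeasure μ] :
    Tendsto (fun k : ℕ => μ.real (Metric.closedBall 0 (k : ℝ))) atTop (𝓝 1) := by
  have := tendsto_integral_closedBall (μ := μ) (integrable_const (1 : ℝ))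
  simpa using this

open Filter Topology in
theorem tendsto_integral_cond {n : ℕ} {μ : Measure (EuclideanSpace ℝ (Fin n))}
    [IsProbabilityMeasure μ] {g : EuclideanSpace ℝ (Fin n) → ℝ} (hg : Integrable g μ) :
    Tendsto (fun k : ℕ => ∫ x, g x ∂(ProbabilityTheory.cond μ (Metric.closedBall 0 (k : ℝ)))) atTop
      (𝓝 (∫ x, g x ∂μ)) := by
  simp only [integral_cond]
  have := ((tendsto_measureReal_closedBall μ).inv₀ one_ne_zero).mul (tendsto_integral_closedBall hg)
  simpa using this

theorem IsIsotropicMeasure.integrable_coord {n : ℕ} {μ : Measure (EuclideanSpace ℝ (Fin n))}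
    [IsProbabilityMeasure μ] (h : IsIsotropicMeasure μ) (i : Fin n) :
    Integrable (fun x => x i) μ := (h.memLp i).integrable (by norm_num)

theorem IsIsotropicMeasure.integrable_mul {n : ℕ} {μ : Measure (EuclideanSpace ℝ (Fin n))}
    (h : IsIsotropicMeasure μ) (i j : Fin n) : Integrable (fun x => x i * x j) μ :=
  (h.memLp i).integrable_mul (h.memLp j)

open Filter Topology in
theorem tendsto_covMatrix_cond {n : ℕ} {μ : Measure (EuclideanSpace ℝ (Fin n))}
    [IsProbabilityMeasure μ] (h : IsIsotropicMeasure μ) :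
    Tendsto (fun k : ℕ => covMatrix (ProbabilityTheory.cond μ (Metric.closedBall 0 (k : ℝ)))) atTop
      (𝓝 1) := by
  have hev : ∀ᶠ k : ℕ in atTop, 0 < μ.real (Metric.closedBall 0 (k : ℝ)) :=
    (tendsto_measureReal_closedBall μ).eventually (lt_mem_nhds one_pos)
  refine tendsto_pi_nhds.2 fun i => tendsto_pi_nhds.2 fun j => ?_
  have t1 := tendsto_integral_cond (h.integrable_mul i j)
  have t2 := (tendsto_integral_cond (h.integrable_coord i)).mul
    (tendsto_integral_cond (h.integrable_coord j))
  have t3 := t1.sub t2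
  rw [h.1 i, h.1 j, h.2 i j, mul_zero, sub_zero] at t3
  rw [Matrix.one_apply]
  refine t3.congr' ?_
  filter_upwards [hev] with k hk
  set s := Metric.closedBall (0 : EuclideanSpace ℝ (Fin n)) (k : ℝ)
  have h0 : μ s ≠ 0 := fun h0 => by simp [measureReal_def, h0] at hk
  have : IsProbabilityMeasure (ProbabilityTheory.cond μ s) :=
    ProbabilityTheory.cond_isProbabilityMeasure h0
  have hR : ∀ᵐ x ∂(ProbabilityTheory.cond μ s), ‖x‖ ≤ k := by
    filter_upwards [ProbabilityTheory.ae_cond_mem measurableSet_closedBall] with x hx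
    simpa [s] using hx
  simp only [covMatrix, Matrix.of_apply]
  set a := ∫ y, y i ∂(ProbabilityTheory.cond μ s)
  set c := ∫ y, y j ∂(ProbabilityTheory.cond μ s)
  have i1 : Integrable (fun x => x i * x j) (ProbabilityTheory.cond μ s) :=
    integrable_of_compact_support hR (by fun_prop)
  have i2 : Integrable (fun x => c * x i) (ProbabilityTheory.cond μ s) :=
    integrable_of_compact_support hR (by fun_prop)
  have i3 : Integrable (fun x => a * x j) (ProbabilityTheory.cond μ s) :=
    integrable_of_compact_support hR (by fun_prop)
  have e : ∀ x : EuclideanSpace ℝ (Fin n), (x i - a) * (x j - c) =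
      x i * x j - c * x i - a * x j + a * c := fun x => by ring
  simp only [e]
  have i4 : Integrable (fun x => x i * x j - c * x i) (ProbabilityTheory.cond μ s) := i1.sub i2
  have i5 : Integrable (fun x => x i * x j - c * x i - a * x j) (ProbabilityTheory.cond μ s) :=
    i4.sub i3
  rw [integral_add i5 (integrable_const _), integral_sub i4 i3, integral_sub i1 i2,
    integral_const_mul, integral_const_mul]
  simp only [integral_const, probReal_univ, smul_eq_mul]
  ring

open Filter Topology in
open scoped Matrix.Norms.L2Operator in
/-- The Poincaré inequality with the KLS constant, for `C¹` functions of finite mean and finite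
Dirichlet energy. Finiteness of the variance is part of the conclusion: it comes from Fatou's
lemma applied to the truncations of the measure to balls. -/
theorem poincare_KLSConst {n : ℕ} (hn : 0 < n) {μ : Measure (EuclideanSpace ℝ (Fin n))}
    [IsProbabilityMeasure μ] (hlc : IsLogConcaveMeasure μ) (hiso : IsIsotropicMeasure μ)
    {f : EuclideanSpace ℝ (Fin n) → ℝ} (hf : ContDiff ℝ 1 f) (hfi : Integrable f μ)
    (hgi : Integrable (fun x => ‖gradient f x‖ ^ 2) μ) :
    Integrable (fun x => (f x - ∫ y, f y ∂μ) ^ 2) μ ∧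
      ∫ x, (f x - ∫ y, f y ∂μ) ^ 2 ∂μ ≤ KLSConst n ^ 2 * ∫ x, ‖gradient f x‖ ^ 2 ∂μ := by
  have : Nonempty (Fin n) := ⟨⟨0, hn⟩⟩
  have hfc := hf.continuous
  set B : ℕ → Set (EuclideanSpace ℝ (Fin n)) := fun k => Metric.closedBall 0 (k : ℝ) with hB
  set ν : ℕ → Measure (EuclideanSpace ℝ (Fin n)) := fun k => ProbabilityTheory.cond μ (B k) with hν
  set c : ℕ → ℝ := fun k => ∫ y, f y ∂(ν k) with hc
  have hBm : ∀ k, MeasurableSet (B k) := fun k => measurableSet_closedBall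
  have tc : Tendsto c atTop (𝓝 (∫ y, f y ∂μ)) := tendsto_integral_cond hfi
  have tcov : Tendsto (fun k => covMatrix (ν k)) atTop (𝓝 1) := tendsto_covMatrix_cond hiso
  have tnorm : Tendsto (fun k => ‖covMatrix (ν k)‖) atTop (𝓝 1) := by
    have := (continuous_norm.tendsto (1 : Matrix (Fin n) (Fin n) ℝ)).comp tcov
    rwa [CStarRing.norm_one] at this
  have tdet : Tendsto (fun k => (covMatrix (ν k)).det) atTop (𝓝 1) := by
    have := ((continuous_id.matrix_det).tendsto (1 : Matrix (Fin n) (Fin n) ℝ)).comp tcov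
    simpa [Function.comp_def] using this
  have hev : ∀ᶠ k : ℕ in atTop, 0 < μ.real (B k) :=
    (tendsto_measureReal_closedBall μ).eventually (lt_mem_nhds one_pos)
  have tR : Tendsto (fun k => KLSConst n ^ 2 * ‖covMatrix (ν k)‖ * ∫ x in B k, ‖gradient f x‖ ^ 2 ∂μ)
      atTop (𝓝 (KLSConst n ^ 2 * ∫ x, ‖gradient f x‖ ^ 2 ∂μ)) := by
    have := (tnorm.const_mul (KLSConst n ^ 2)).mul (tendsto_integral_closedBall hgi)
    simpa using this
  have hbound : ∀ᶠ k in atTop, ∫⁻ x, (B k).indicator (fun x => ENNReal.ofReal ((f x - c k) ^ 2)) x ∂μ ≤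
      ENNReal.ofReal (KLSConst n ^ 2 * ‖covMatrix (ν k)‖ * ∫ x in B k, ‖gradient f x‖ ^ 2 ∂μ) := by
    filter_upwards [hev, tdet.eventually (lt_mem_nhds one_pos)] with k hk hkd
    have h0 : μ (B k) ≠ 0 := fun h0 => by simp [measureReal_def, h0] at hk
    have : IsProbabilityMeasure (ν k) := ProbabilityTheory.cond_isProbabilityMeasure h0
    have hR : ∀ᵐ x ∂(ν k), ‖x‖ ≤ k := by
      filter_upwards [ProbabilityTheory.ae_cond_mem (hBm k)] with x hx
      simpa [hB] using hx
    have key := variance_le_KLSConst_mul_covMatrix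
      (hlc.cond (hBm k) (convex_closedBall _ _) h0) hR hkd.ne' hf
    rw [integral_cond, integral_cond μ (B k) (fun x => ‖gradient f x‖ ^ 2)] at key
    rw [lintegral_indicator (hBm k), ← ofReal_integral_eq_lintegral_ofReal]
    · apply ENNReal.ofReal_le_ofReal
      have e : ∀ u : ℝ, KLSConst n ^ 2 * ‖covMatrix (ν k)‖ * ((μ.real (B k))⁻¹ * u) =
        (μ.real (B k))⁻¹ * (KLSConst n ^ 2 * ‖covMatrix (ν k)‖ * u) := fun u => by ring
      rw [e] at key
      exact le_of_mul_le_mul_left key (inv_pos.2 hk)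
    · exact ContinuousOn.integrableOn_compact (isCompact_closedBall _ _) (by fun_prop)
    · exact Filter.Eventually.of_forall fun x => sq_nonneg _
  have hpt : ∀ x, Tendsto (fun k => (B k).indicator (fun x => ENNReal.ofReal ((f x - c k) ^ 2)) x)
      atTop (𝓝 (ENNReal.ofReal ((f x - ∫ y, f y ∂μ) ^ 2))) := by
    intro x
    have t := ENNReal.tendsto_ofReal ((tc.const_sub (f x)).pow 2)
    refine t.congr' ?_
    obtain ⟨N, hN⟩ := exists_nat_ge ‖x‖
    filter_upwards [eventually_ge_atTop N] with k hk
    have hxk : x ∈ B k := by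
      have : (N : ℝ) ≤ k := by exact_mod_cast hk
      simp only [hB, mem_closedBall_zero_iff]; linarith
    rw [Set.indicator_of_mem hxk]
  have hfatou : ∫⁻ x, ENNReal.ofReal ((f x - ∫ y, f y ∂μ) ^ 2) ∂μ ≤
      ENNReal.ofReal (KLSConst n ^ 2 * ∫ x, ‖gradient f x‖ ^ 2 ∂μ) := by
    calc _ = ∫⁻ x, liminf (fun k =>
            (B k).indicator (fun x => ENNReal.ofReal ((f x - c k) ^ 2)) x) atTop ∂μ := by
          congr 1; ext x; exact (hpt x).liminf_eq.symm
      _ ≤ liminf (fun k =>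
            ∫⁻ x, (B k).indicator (fun x => ENNReal.ofReal ((f x - c k) ^ 2)) x ∂μ) atTop :=
          lintegral_liminf_le fun k => Measurable.indicator (by fun_prop) (hBm k)
      _ ≤ liminf (fun k => ENNReal.ofReal
            (KLSConst n ^ 2 * ‖covMatrix (ν k)‖ * ∫ x in B k, ‖gradient f x‖ ^ 2 ∂μ)) atTop :=
          liminf_le_liminf hbound
      _ = _ := (ENNReal.tendsto_ofReal tR).liminf_eq
  have hInt : Integrable (fun x => (f x - ∫ y, f y ∂μ) ^ 2) μ := by
    refine ⟨by fun_prop, ?_⟩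
    rw [hasFiniteIntegral_iff_ofReal (Filter.Eventually.of_forall fun x => sq_nonneg _)]
    exact hfatou.trans_lt ENNReal.ofReal_lt_top
  refine ⟨hInt, ?_⟩
  rw [← ofReal_integral_eq_lintegral_ofReal hInt
    (Filter.Eventually.of_forall fun x => sq_nonneg _)] at hfatou
  exact (ENNReal.ofReal_le_ofReal_iff
    (mul_nonneg (sq_nonneg _) (integral_nonneg fun x => sq_nonneg _))).1 hfatou

/-! ### The upper bound -/

theorem hasGradientAt_quadratic {n : ℕ} {M : Matrix (Fin n) (Fin n) ℝ} (hM : ∀ i j, M i j = M j i)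
    (x : EuclideanSpace ℝ (Fin n)) :
    HasGradientAt (fun x : EuclideanSpace ℝ (Fin n) => ∑ i, ∑ j, M i j * (x i * x j))
      ((2 : ℝ) • WithLp.toLp 2 (M.mulVec x.ofLp)) x := by
  rw [hasGradientAt_iff_hasFDerivAt]
  have hc : ∀ i, HasFDerivAt (fun x : EuclideanSpace ℝ (Fin n) => x i)
      (EuclideanSpace.proj (𝕜 := ℝ) i : EuclideanSpace ℝ (Fin n) →L[ℝ] ℝ) x :=
    fun i => (EuclideanSpace.proj (𝕜 := ℝ) i).hasFDerivAt
  have := HasFDerivAt.fun_sum (u := Finset.univ) fun i _ =>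
    HasFDerivAt.fun_sum (u := Finset.univ) fun j _ => ((hc i).mul (hc j)).const_mul (M i j)
  refine this.congr_fderiv ?_
  ext v
  simp only [sum_apply, smul_apply, add_apply, PiLp.proj_apply, smul_eq_mul,
    InnerProductSpace.toDual_apply_apply, inner_smul_left, PiLp.inner_apply, RCLike.inner_apply,
    conj_trivial, Matrix.mulVec, dotProduct]
  have e1 : ∑ i, ∑ j, M i j * (x i * v j + x j * v i) =
      (∑ i, ∑ j, M i j * x i * v j) + ∑ i, ∑ j, M i j * x j * v i := by
    simp only [← Finset.sum_add_distrib]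
    refine Finset.sum_congr rfl fun i _ => Finset.sum_congr rfl fun j _ => by ring
  have e2 : ∑ i, ∑ j, M i j * x i * v j = ∑ i, ∑ j, M i j * x j * v i := by
    rw [Finset.sum_comm]
    refine Finset.sum_congr rfl fun i _ => Finset.sum_congr rfl fun j _ => by rw [hM]
  rw [e1, e2, ← two_mul]
  congr 1
  refine Finset.sum_congr rfl fun i _ => ?_
  rw [Finset.mul_sum]
  exact Finset.sum_congr rfl fun j _ => by ring

theorem norm_sq_mulVec {n : ℕ} (M : Matrix (Fin n) (Fin n) ℝ) (x : EuclideanSpace ℝ (Fin n)) :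
    ‖(2 : ℝ) • WithLp.toLp 2 (M.mulVec x.ofLp)‖ ^ 2 =
      4 * ∑ i, ∑ j, ∑ k, M i j * M i k * (x j * x k) := by
  rw [norm_smul, mul_pow, EuclideanSpace.real_norm_sq_eq]
  congr 1
  · norm_num
  refine Finset.sum_congr rfl fun i _ => ?_
  simp only [Matrix.mulVec, dotProduct]
  rw [sq, Finset.sum_mul_sum]
  exact Finset.sum_congr rfl fun j _ => Finset.sum_congr rfl fun k _ => by ring

/-- With `M = E [X₁ (X ⊗ X)]` and `h(x) = ⟨M x, x⟩`, one has `‖M‖² = E [X₁ h(X)]`, which by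
Cauchy–Schwarz and the Poincaré inequality is at most `ψₙ · (E |2 M X|²)^{1/2} = 2 ψₙ ‖M‖`. -/
theorem hsNorm_le_two_mul_KLSConst {n : ℕ} {μ : Measure (EuclideanSpace ℝ (Fin n))}
    [IsProbabilityMeasure μ] (hlc : IsLogConcaveMeasure μ) (hiso : IsIsotropicMeasure μ)
    (z : Fin n) :
    hsNorm (Matrix.of fun i j => ∫ x, x z * (x i * x j) ∂μ) ≤ 2 * KLSConst n := by
  set M : Matrix (Fin n) (Fin n) ℝ := Matrix.of fun i j => ∫ x, x z * (x i * x j) ∂μ with hM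
  have hsym : ∀ i j, M i j = M j i := by
    intro i j; simp only [hM, Matrix.of_apply, mul_comm]
  set h : EuclideanSpace ℝ (Fin n) → ℝ := fun x => ∑ i, ∑ j, M i j * (x i * x j) with hh
  have hcd : ContDiff ℝ 1 h := by
    rw [hh]
    refine ContDiff.sum fun i _ => ContDiff.sum fun j _ => contDiff_const.mul ?_
    exact ((EuclideanSpace.proj (𝕜 := ℝ) i).contDiff).mul ((EuclideanSpace.proj (𝕜 := ℝ) j).contDiff)
  have hInt : Integrable h μ :=
    integrable_finsetSum _ fun i _ => integrable_finsetSum _ fun j _ =>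
      (hiso.integrable_mul i j).const_mul _
  have hgrad : ∀ x, ‖gradient h x‖ ^ 2 = 4 * ∑ i, ∑ j, ∑ k, M i j * M i k * (x j * x k) := by
    intro x
    rw [(hasGradientAt_quadratic hsym x).gradient, norm_sq_mulVec]
  have hgi3 : ∀ i j k, Integrable (fun x : EuclideanSpace ℝ (Fin n) =>
      M i j * M i k * (x j * x k)) μ := fun i j k => (hiso.integrable_mul j k).const_mul _
  have hgi2 : ∀ i j, Integrable (fun x : EuclideanSpace ℝ (Fin n) =>
      ∑ k, M i j * M i k * (x j * x k)) μ := fun i j => integrable_finsetSum _ fun k _ => hgi3 i j k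
  have hgi1 : ∀ i, Integrable (fun x : EuclideanSpace ℝ (Fin n) =>
      ∑ j, ∑ k, M i j * M i k * (x j * x k)) μ := fun i => integrable_finsetSum _ fun j _ => hgi2 i j
  set s := ∑ i, ∑ j, M i j ^ 2 with hs
  have hs0 : 0 ≤ s := Finset.sum_nonneg fun i _ => Finset.sum_nonneg fun j _ => sq_nonneg _
  have hgI : ∫ x, ‖gradient h x‖ ^ 2 ∂μ = 4 * s := by
    simp only [hgrad]
    rw [integral_const_mul, integral_finsetSum _ fun i _ => hgi1 i]
    congr 1
    refine Finset.sum_congr rfl fun i _ => ?_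
    rw [integral_finsetSum _ fun j _ => hgi2 i j]
    refine Finset.sum_congr rfl fun j _ => ?_
    rw [integral_finsetSum _ fun k _ => hgi3 i j k]
    simp only [integral_const_mul, hiso.2, mul_ite, mul_one, mul_zero, Finset.sum_ite_eq,
      Finset.mem_univ, if_true, sq]
  have hgint : Integrable (fun x => ‖gradient h x‖ ^ 2) μ := by
    simp only [hgrad]
    exact (integrable_finsetSum _ fun i _ => hgi1 i).const_mul _
  obtain ⟨hV, hP⟩ := poincare_KLSConst z.pos hlc hiso hcd hInt hgint
  rw [hgI] at hP
  set c := ∫ y, h y ∂μ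
  -- If `x z * (x i * x j)` were not integrable, `M i j` would be `0`.
  have hterm : ∀ i j, Integrable (fun x => M i j * (x z * (x i * x j))) μ := by
    intro i j
    by_cases hij : Integrable (fun x => x z * (x i * x j)) μ
    · exact hij.const_mul _
    · have : M i j = 0 := integral_undef hij
      simp [this]
  have hxh : ∀ x : EuclideanSpace ℝ (Fin n), x z * (h x - c) =
      (∑ i, ∑ j, M i j * (x z * (x i * x j))) - c * x z := by
    intro x
    simp only [hh, mul_sub, Finset.mul_sum]
    congr 1
    · exact Finset.sum_congr rfl fun i _ => Finset.sum_congr rfl fun j _ => by ring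
    · ring
  have hi1 : Integrable (fun x => ∑ i, ∑ j, M i j * (x z * (x i * x j))) μ :=
    integrable_finsetSum _ fun i _ => integrable_finsetSum _ fun j _ => hterm i j
  have hi2 : Integrable (fun x => c * x z) μ := (hiso.integrable_coord z).const_mul _
  have hcross : ∫ x, x z * (h x - c) ∂μ = s := by
    simp only [hxh]
    rw [integral_sub hi1 hi2, integral_const_mul, hiso.1, mul_zero, sub_zero,
      integral_finsetSum _ fun i _ => integrable_finsetSum _ fun j _ => hterm i j]
    refine Finset.sum_congr rfl fun i _ => ?_
    rw [integral_finsetSum _ fun j _ => hterm i j]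
    refine Finset.sum_congr rfl fun j _ => ?_
    rw [integral_const_mul, sq]
    rfl
  have hci : Integrable (fun x => x z * (h x - c)) μ := by
    simp only [hxh]; exact hi1.sub hi2
  have hzz : ∫ x, x z ^ 2 ∂μ = 1 := by
    have := hiso.2 z z
    simpa only [if_true, ← sq] using this
  -- Cauchy–Schwarz, from `0 ≤ E (s X₁ - (h - c))²`.
  have hCS : s ^ 2 ≤ ∫ x, (h x - c) ^ 2 ∂μ := by
    have h0 : 0 ≤ ∫ x, (s * x z - (h x - c)) ^ 2 ∂μ := integral_nonneg fun x => sq_nonneg _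
    have e : ∀ x : EuclideanSpace ℝ (Fin n), (s * x z - (h x - c)) ^ 2 =
        s ^ 2 * x z ^ 2 - 2 * s * (x z * (h x - c)) + (h x - c) ^ 2 := fun x => by ring
    have j1 : Integrable (fun x => s ^ 2 * x z ^ 2) μ := (hiso.integrable_sq z).const_mul _
    have j2 : Integrable (fun x => 2 * s * (x z * (h x - c))) μ := hci.const_mul _
    have j3 : Integrable (fun x => s ^ 2 * x z ^ 2 - 2 * s * (x z * (h x - c))) μ := j1.sub j2
    simp only [e] at h0
    rw [integral_add j3 hV, integral_sub j1 j2, integral_const_mul, integral_const_mul, hcross,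
      hzz] at h0
    linarith
  have hK := KLSConst_nonneg n
  have hfin : s ≤ (2 * KLSConst n) ^ 2 := by
    rcases hs0.eq_or_lt with h0 | hpos
    · rw [← h0]; positivity
    · nlinarith [hCS.trans hP]
  exact (Real.sqrt_le_left (by positivity)).2 hfin

/-! ### The lower bound: independent centered exponential coordinates -/

/-- The density `e^{-(t+1)} 1_{t > -1}` of a centered standard exponential random variable. -/
def expDensity (t : ℝ) : ℝ := (Set.Ioi (-1)).indicator (fun t => exp (-(t + 1))) t

theorem expDensity_nonneg (t : ℝ) : 0 ≤ expDensity t :=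
  Set.indicator_nonneg (fun _ _ => (exp_pos _).le) t

theorem measurable_expDensity : Measurable expDensity :=
  (by fun_prop : Measurable fun t : ℝ => exp (-(t + 1))).indicator measurableSet_Ioi

theorem expDensity_logConcave (x y t : ℝ) (ht : 0 ≤ t) (ht1 : t ≤ 1) :
    expDensity x ^ t * expDensity y ^ (1 - t) ≤ expDensity (t * x + (1 - t) * y) := by
  rcases ht.eq_or_lt with rfl | ht'
  · simp
  rcases ht1.eq_or_lt with rfl | ht1'
  · simp
  by_cases hx : x ∈ Set.Ioi (-1 : ℝ)
  · by_cases hy : y ∈ Set.Ioi (-1 : ℝ)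
    · have hz : t * x + (1 - t) * y ∈ Set.Ioi (-1 : ℝ) := by
        simp only [Set.mem_Ioi] at *; nlinarith
      rw [expDensity, expDensity, expDensity, Set.indicator_of_mem hx, Set.indicator_of_mem hy,
        Set.indicator_of_mem hz, ← Real.exp_mul, ← Real.exp_mul, ← Real.exp_add]
      apply le_of_eq; congr 1; ring
    · have : expDensity y = 0 := Set.indicator_of_notMem hy _
      rw [this, Real.zero_rpow (by linarith), mul_zero]
      exact expDensity_nonneg _
  · have : expDensity x = 0 := Set.indicator_of_notMem hx _
    rw [this, Real.zero_rpow ht'.ne', zero_mul]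
    exact expDensity_nonneg _

theorem integrableOn_exp_neg_mul_pow (k : ℕ) :
    IntegrableOn (fun s : ℝ => exp (-s) * s ^ k) (Set.Ioi 0) := by
  have := Real.GammaIntegral_convergent (s := k + 1) (by positivity)
  simpa only [add_sub_cancel_right, Real.rpow_natCast] using this

theorem integral_exp_neg_mul_pow (k : ℕ) :
    ∫ s in Set.Ioi (0 : ℝ), exp (-s) * s ^ k = k.factorial := by
  have := Real.Gamma_eq_integral (s := k + 1) (by positivity)
  rw [Real.Gamma_nat_eq_factorial] at this
  simpa only [add_sub_cancel_right, Real.rpow_natCast] using this.symm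

theorem integral_expDensity_mul (F : ℝ → ℝ) :
    ∫ t, expDensity t * F t = ∫ s in Set.Ioi (0 : ℝ), exp (-s) * F (s - 1) := by
  rw [← integral_sub_right_eq_self _ (1 : ℝ), ← integral_indicator measurableSet_Ioi]
  congr 1; ext s
  by_cases hs : 0 < s
  · rw [Set.indicator_of_mem (Set.mem_Ioi.2 hs), expDensity,
      Set.indicator_of_mem (by simp [hs]), sub_add_cancel]
  · rw [Set.indicator_of_notMem (by simpa using hs), expDensity,
      Set.indicator_of_notMem (by simpa using hs), zero_mul]

/-- The moments of order at most `3` of a centered exponential variable are `1, 0, 1, 2`. -/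
theorem expDensity_moments :
    (∫ t, expDensity t * t ^ 0) = 1 ∧ (∫ t, expDensity t * t ^ 1) = 0 ∧
      (∫ t, expDensity t * t ^ 2) = 1 ∧ (∫ t, expDensity t * t ^ 3) = 2 := by
  have hi := integrableOn_exp_neg_mul_pow
  have hI := integral_exp_neg_mul_pow
  have key : ∀ a b c d : ℝ, ∫ s in Set.Ioi (0 : ℝ), exp (-s) * (a + b * s + c * s ^ 2 + d * s ^ 3) =
      a + b + 2 * c + 6 * d := by
    intro a b c d
    have e : ∀ s : ℝ, exp (-s) * (a + b * s + c * s ^ 2 + d * s ^ 3) =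
        a * (exp (-s) * s ^ 0) + b * (exp (-s) * s ^ 1) + c * (exp (-s) * s ^ 2) +
          d * (exp (-s) * s ^ 3) := fun s => by ring
    simp only [e]
    have h2 : IntegrableOn (fun s : ℝ => a * (exp (-s) * s ^ 0) + b * (exp (-s) * s ^ 1))
        (Set.Ioi 0) := ((hi 0).const_mul a).add ((hi 1).const_mul b)
    have h3 : IntegrableOn (fun s : ℝ => a * (exp (-s) * s ^ 0) + b * (exp (-s) * s ^ 1) +
        c * (exp (-s) * s ^ 2)) (Set.Ioi 0) := h2.add ((hi 2).const_mul c)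
    rw [integral_add h3 ((hi 3).const_mul d), integral_add h2 ((hi 2).const_mul c),
      integral_add ((hi 0).const_mul a) ((hi 1).const_mul b), integral_const_mul,
      integral_const_mul, integral_const_mul, integral_const_mul, hI, hI, hI, hI]
    simp [Nat.factorial]
    ring
  refine ⟨?_, ?_, ?_, ?_⟩ <;> rw [integral_expDensity_mul (fun t => t ^ _)]
  · convert key 1 0 0 0 using 3 <;> ring
  · convert key (-1) 1 0 0 using 3 <;> ring
  · convert key 1 (-2) 1 0 using 3 <;> ring
  · convert key (-1) 3 (-3) 1 using 3 <;> ring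

/-- The law of a vector with independent centered standard exponential coordinates. -/
def expMeasure (n : ℕ) : Measure (EuclideanSpace ℝ (Fin n)) :=
  volume.withDensity fun x => ENNReal.ofReal (∏ i, expDensity (x i))

theorem measurable_prod_expDensity (n : ℕ) :
    Measurable fun x : EuclideanSpace ℝ (Fin n) => ∏ i, expDensity (x i) :=
  Finset.measurable_fun_prod _ fun i _ => measurable_expDensity.comp (by fun_prop)

theorem integral_prod_euclidean {n : ℕ} (F : Fin n → ℝ → ℝ) :
    ∫ x : EuclideanSpace ℝ (Fin n), ∏ i, F i (x i) = ∏ i, ∫ t, F i t := by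
  rw [← integral_fintype_prod_volume_eq_prod]
  exact (EuclideanSpace.volume_preserving_symm_measurableEquiv_toLp (Fin n)).integral_comp
    (MeasurableEquiv.measurableEmbedding _) (fun y : Fin n → ℝ => ∏ i, F i (y i))

theorem integral_expMeasure {n : ℕ} (a : Fin n → ℕ) :
    ∫ x, (∏ i, x i ^ a i) ∂(expMeasure n) = ∏ i, ∫ t, expDensity t * t ^ a i := by
  rw [expMeasure, integral_withDensity_eq_integral_toReal_smul
    (measurable_prod_expDensity n).ennreal_ofReal (by simp), ← integral_prod_euclidean]
  congr 1; ext x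
  rw [ENNReal.toReal_ofReal (Finset.prod_nonneg fun i _ => expDensity_nonneg _), smul_eq_mul,
    Finset.prod_mul_distrib]

theorem isProbabilityMeasure_expMeasure (n : ℕ) : IsProbabilityMeasure (expMeasure n) := by
  constructor
  have h1 : ∫ x : EuclideanSpace ℝ (Fin n), ∏ i, expDensity (x i) = 1 := by
    have := expDensity_moments.1
    simp only [pow_zero, mul_one] at this
    rw [integral_prod_euclidean fun _ => expDensity, this]
    simp
  have hi : Integrable fun x : EuclideanSpace ℝ (Fin n) => ∏ i, expDensity (x i) := by
    by_contra hcon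
    rw [integral_undef hcon] at h1
    exact zero_ne_one h1
  rw [expMeasure, withDensity_apply _ MeasurableSet.univ, Measure.restrict_univ,
    ← ofReal_integral_eq_lintegral_ofReal hi (Filter.Eventually.of_forall fun x =>
      Finset.prod_nonneg fun i _ => expDensity_nonneg _), h1, ENNReal.ofReal_one]

theorem isLogConcaveMeasure_expMeasure (n : ℕ) : IsLogConcaveMeasure (expMeasure n) := by
  refine ⟨_, measurable_prod_expDensity n,
    ⟨fun x => Finset.prod_nonneg fun i _ => expDensity_nonneg _, fun x y t ht ht1 => ?_⟩, rfl⟩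
  rw [← Real.finsetProd_rpow _ _ fun i _ => expDensity_nonneg _,
    ← Real.finsetProd_rpow _ _ fun i _ => expDensity_nonneg _, ← Finset.prod_mul_distrib]
  refine Finset.prod_le_prod (fun i _ => mul_nonneg (Real.rpow_nonneg (expDensity_nonneg _) _)
    (Real.rpow_nonneg (expDensity_nonneg _) _)) fun i _ => ?_
  exact expDensity_logConcave _ _ t ht ht1

theorem prod_pow_single {n : ℕ} (x : EuclideanSpace ℝ (Fin n)) (i : Fin n) (k : ℕ) :
    ∏ l, x l ^ (Pi.single i k : Fin n → ℕ) l = x i ^ k := by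
  rw [Finset.prod_eq_single i]
  · simp
  · intro l _ hl; simp [Pi.single_eq_of_ne hl]
  · simp

theorem integral_expMeasure_pow {n : ℕ} (i : Fin n) (k : ℕ) :
    ∫ x, x i ^ k ∂(expMeasure n) = ∫ t, expDensity t * t ^ k := by
  have := integral_expMeasure (Pi.single i k : Fin n → ℕ)
  simp only [prod_pow_single] at this
  rw [this, Finset.prod_eq_single i]
  · simp
  · intro l _ hl
    rw [Pi.single_eq_of_ne hl]; exact expDensity_moments.1
  · simp

theorem isIsotropicMeasure_expMeasure (n : ℕ) : IsIsotropicMeasure (expMeasure n) := by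
  obtain ⟨-, m1, m2, -⟩ := expDensity_moments
  refine ⟨fun i => ?_, fun i j => ?_⟩
  · have := integral_expMeasure_pow i 1
    simpa only [pow_one, m1] using this.trans m1
  · split_ifs with hij
    · subst hij
      simp only [← sq]
      exact (integral_expMeasure_pow i 2).trans m2
    · have := integral_expMeasure (Pi.single i 1 + Pi.single j 1 : Fin n → ℕ)
      simp only [Pi.add_apply, pow_add, Finset.prod_mul_distrib, prod_pow_single, pow_one] at this
      rw [this]
      refine Finset.prod_eq_zero (Finset.mem_univ i) ?_
      simpa [Pi.single_eq_of_ne hij] using m1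

/-- The entry at `(z, z)` of the matrix is the third moment `2` of a centered exponential. -/
theorem two_le_hsNorm_expMeasure {n : ℕ} (z : Fin n) :
    2 ≤ hsNorm (Matrix.of fun i j => ∫ x, x z * (x i * x j) ∂(expMeasure n)) := by
  refine Real.le_sqrt_of_sq_le ?_
  have h3 : ∫ x, x z * (x z * x z) ∂(expMeasure n) = 2 := by
    have := (integral_expMeasure_pow z 3).trans expDensity_moments.2.2.2
    rw [← this]; congr 1; ext x; ring
  calc (2 : ℝ) ^ 2 = (∫ x, x z * (x z * x z) ∂(expMeasure n)) ^ 2 := by rw [h3]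
    _ ≤ ∑ j, (∫ x, x z * (x z * x j) ∂(expMeasure n)) ^ 2 :=
      Finset.single_le_sum (f := fun j => (∫ x, x z * (x z * x j) ∂(expMeasure n)) ^ 2)
        (fun j _ => sq_nonneg _) (Finset.mem_univ z)
    _ ≤ _ := Finset.single_le_sum
        (f := fun i => ∑ j, (∫ x, x z * (x i * x j) ∂(expMeasure n)) ^ 2)
        (fun i _ => Finset.sum_nonneg fun j _ => sq_nonneg _) (Finset.mem_univ z)

/-- The coefficient `κₙ` satisfies `2 ≤ κₙ ≤ 2 ψₙ`. -/
theorem kappa_bounds (n : ℕ) (hn : 1 ≤ n) :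
    2 ≤ kappaConst n ∧ kappaConst n ≤ 2 * KLSConst n := by
  have hub : ∀ s ∈ {s : ℝ | ∃ μ : Measure (EuclideanSpace ℝ (Fin n)), IsProbabilityMeasure μ ∧
      IsLogConcaveMeasure μ ∧ IsIsotropicMeasure μ ∧ ∃ h : 0 < n,
      s = hsNorm (Matrix.of fun i j => ∫ x, x ⟨0, h⟩ * (x i * x j) ∂μ)}, s ≤ 2 * KLSConst n := by
    rintro _ ⟨μ, hμ, hlc, hiso, h, rfl⟩
    exact hsNorm_le_two_mul_KLSConst hlc hiso _
  have hmem : hsNorm (Matrix.of fun i j => ∫ x, x ⟨0, hn⟩ * (x i * x j) ∂(expMeasure n)) ∈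
      {s : ℝ | ∃ μ : Measure (EuclideanSpace ℝ (Fin n)), IsProbabilityMeasure μ ∧
      IsLogConcaveMeasure μ ∧ IsIsotropicMeasure μ ∧ ∃ h : 0 < n,
      s = hsNorm (Matrix.of fun i j => ∫ x, x ⟨0, h⟩ * (x i * x j) ∂μ)} :=
    ⟨expMeasure n, isProbabilityMeasure_expMeasure n, isLogConcaveMeasure_expMeasure n,
      isIsotropicMeasure_expMeasure n, hn, rfl⟩
  exact ⟨(two_le_hsNorm_expMeasure ⟨0, hn⟩).trans (le_csSup ⟨_, hub⟩ hmem), csSup_le ⟨_, hmem⟩ hub⟩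

end
end

section
/- Let n ≥ 1, let ‖·‖ be a gauge function on ℝⁿ, and let G be a standard Gaussian random vector in ℝⁿ. Then for every p ≥ 2, (E‖G‖ᵖ)^{1/p} ≤ 3·√p·E‖G‖. -/
/-!
Write `e = E f(G)`, `M r = E f(G) ^ r` and `s = 1/√2`. The core is the recursive inequality
`M p ≤ 2 e M (p - 1) + 2π (p - 1) e² M (p - 2)` (`moment_ineq`). Bounding the lower moments by
powers of `m = (M p) ^ (1/p)` turns it into `m² ≤ 2 e m + 2π (p - 1) e²`, a quadratic inequality
that forces `m ≤ 3 √p e`.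

For the recursion, take independent standard Gaussians `U`, `W` and put `X = s (U + W)`,
`Z = s (U - W)`, which are again independent standard Gaussians, so `e M (p - 1)` is the mean of
`f(Z) f(X) ^ (p - 1)`. Let `ξ` be a linear functional supporting `f` at `U` (Hahn–Banach). Then
`f(Z) ≥ s (f(U) - ⟨ξ, W⟩)`.

* The first term contributes at least `M p / 2`, because `U = s (X + Z)` and
  `E f(x + Z) ≥ f(x)` by Jensen.
* The second term is bounded, conditionally on `U`, by Gaussian integration by parts in `W`
  (`ibp_ineq`), which produces `(p - 1) f(ξ) f(X) ^ (p - 2) / 2`. Instead of derivatives, the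
  proof uses the Cameron–Martin shift, `exp t ≥ 1 + t`, and the subadditivity of `f`.
* Finally `f(ξ) ≤ 2π e²` (`gauge_support_le`): every functional `η` dominated by `f` satisfies
  `e ≥ E max ⟨η, G⟩ 0 = ‖η‖ / √(2π)`, and `f(ξ)` is of the form `⟨η, ξ⟩`.
-/


open MeasureTheory Real Pointwise RealInnerProductSpace
open scoped ENNReal

noncomputable section

namespace KahaneGauge

variable {n : ℕ}

/-! ### The standard Gaussian measure -/

/-- The density of the standard Gaussian measure on `ℝⁿ`. -/
def dens (n : ℕ) (x : EuclideanSpace ℝ (Fin n)) : ℝ :=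
  (2 * π) ^ (-(n : ℝ) / 2) * Real.exp (-‖x‖ ^ 2 / 2)

lemma dens_nonneg (x : EuclideanSpace ℝ (Fin n)) : 0 ≤ dens n x := by
  unfold dens; positivity

lemma continuous_dens : Continuous (dens n) := by
  unfold dens; fun_prop

lemma integral_stdGaussian {F : Type*} [NormedAddCommGroup F] [NormedSpace ℝ F]
    (g : EuclideanSpace ℝ (Fin n) → F) :
    ∫ x, g x ∂(stdGaussian n) = ∫ x, dens n x • g x := by
  have : stdGaussian n = volume.withDensity fun x => ENNReal.ofReal (dens n x) := rfl
  rw [this, integral_withDensity_eq_integral_toReal_smul]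
  · simp [dens_nonneg]
  · exact continuous_dens.measurable.ennreal_ofReal
  · simp

lemma integral_dens : ∫ x, dens n x = 1 := by
  unfold dens
  rw [integral_const_mul]
  have h := GaussianFourier.integral_rexp_neg_mul_sq_norm
    (V := EuclideanSpace ℝ (Fin n)) (b := 1 / 2) (by norm_num)
  have h2 : ∀ x : EuclideanSpace ℝ (Fin n), -‖x‖ ^ 2 / 2 = -(1 / 2) * ‖x‖ ^ 2 := by
    intro x; ring
  simp_rw [h2, h]
  rw [finrank_euclideanSpace, Fintype.card_fin, show π / (1 / 2) = 2 * π by ring,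
    ← Real.rpow_add (by positivity)]
  simp [neg_div]

instance : IsProbabilityMeasure (stdGaussian n) := by
  constructor
  have : stdGaussian n = volume.withDensity fun x => ENNReal.ofReal (dens n x) := rfl
  rw [this, withDensity_apply _ MeasurableSet.univ, Measure.restrict_univ,
    ← ofReal_integral_eq_lintegral_ofReal, integral_dens]
  · simp
  · by_contra h
    have := integral_dens (n := n)
    rw [integral_undef h] at this
    norm_num at this
  · exact Filter.Eventually.of_forall dens_nonneg

/-- The measure given by the explicit density is Mathlib's `ProbabilityTheory.stdGaussian`: both
have characteristic function `exp (-‖t‖² / 2)`. This makes Fernique's theorem and the rotation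
invariance of the product measure available. -/
lemma stdGaussian_eq :
    stdGaussian n = ProbabilityTheory.stdGaussian (EuclideanSpace ℝ (Fin n)) := by
  apply Measure.ext_of_charFun
  ext t
  rw [ProbabilityTheory.charFun_stdGaussian, charFun_apply, integral_stdGaussian]
  have h := GaussianFourier.integral_cexp_neg_mul_sq_norm_add
    (V := EuclideanSpace ℝ (Fin n)) (b := 1 / 2) (by norm_num) Complex.I t
  have h2 : ∀ x : EuclideanSpace ℝ (Fin n),
      dens n x • Complex.exp (⟪x, t⟫ * Complex.I) = (((2 * π) ^ (-(n : ℝ) / 2) : ℝ) : ℂ) *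
        Complex.exp (-(1 / 2) * ‖x‖ ^ 2 + Complex.I * ⟪t, x⟫) := by
    intro x
    rw [Complex.exp_add, real_inner_comm, mul_comm Complex.I]
    simp only [dens, Complex.real_smul, Complex.ofReal_mul, Complex.ofReal_exp]
    push_cast
    ring_nf
  simp_rw [h2]
  rw [integral_const_mul, h, finrank_euclideanSpace, Fintype.card_fin, ← mul_assoc]
  have h3 : (((2 * π) ^ (-(n : ℝ) / 2) : ℝ) : ℂ) * ((π : ℂ) / (1 / 2)) ^ ((n : ℂ) / 2) = 1 := by
    rw [show (π : ℂ) / (1 / 2) = ((2 * π : ℝ) : ℂ) by push_cast; ring,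
      show ((n : ℂ) / 2) = (((n : ℝ) / 2 : ℝ) : ℂ) by push_cast; ring,
      ← Complex.ofReal_cpow (by positivity), ← Complex.ofReal_mul, ← Real.rpow_add (by positivity)]
    simp [neg_div]
  rw [h3, one_mul, Complex.I_sq]
  congr 1
  ring

instance : ProbabilityTheory.IsGaussian (stdGaussian n) := by
  rw [stdGaussian_eq]; infer_instance

lemma integral_abs_gaussianReal (v : NNReal) :
    ∫ x, |x| ∂(ProbabilityTheory.gaussianReal 0 v) = 2 * √v / √(2 * π) := by
  by_cases hv : v = 0
  · simp [hv]
  have hv0 : (0 : ℝ) < v := by positivity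
  rw [ProbabilityTheory.integral_gaussianReal_eq_integral_smul hv]
  have h1 : ∀ x : ℝ, ProbabilityTheory.gaussianPDFReal 0 v x • |x| =
      (fun t => (√(2 * π * v))⁻¹ * (t ^ (1 : ℝ) * rexp (-(1 / (2 * v)) * t ^ (2 : ℝ)))) |x| := by
    intro x
    simp [ProbabilityTheory.gaussianPDFReal]
    ring_nf
  rw [integral_congr_ae (Filter.Eventually.of_forall h1),
    integral_comp_abs (f := fun t : ℝ => (√(2 * π * v))⁻¹ *
      (t ^ (1 : ℝ) * rexp (-(1 / (2 * v)) * t ^ (2 : ℝ)))), integral_const_mul,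
    integral_rpow_mul_exp_neg_mul_rpow (by norm_num) (by norm_num) (by positivity)]
  norm_num
  rw [Real.rpow_neg_one]
  field_simp
  rw [Real.sq_sqrt hv0.le]

/-- `E |⟨ξ, G⟩| = ‖ξ‖ √(2/π)`. -/
lemma integral_abs_inner (ξ : EuclideanSpace ℝ (Fin n)) :
    ∫ x, |⟪ξ, x⟫| ∂(stdGaussian n) = 2 * ‖ξ‖ / √(2 * π) := by
  have h := ProbabilityTheory.IsGaussian.map_eq_gaussianReal (μ := stdGaussian n) (innerSL ℝ ξ)
  have h1 : ∫ x, |⟪ξ, x⟫| ∂(stdGaussian n) =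
      ∫ y, |y| ∂((stdGaussian n).map (innerSL ℝ ξ)) := by
    rw [integral_map (by fun_prop) (by fun_prop)]
    rfl
  rw [h1, h, stdGaussian_eq, ProbabilityTheory.integral_strongDual_stdGaussian,
    ProbabilityTheory.variance_dual_stdGaussian, integral_abs_gaussianReal]
  simp

/-! ### Functions of polynomial growth -/

/-- A continuous function bounded by a constant times a power of `1 + ‖z‖`. Such functions are
integrable for every Gaussian measure, and the class is stable under the operations used below. -/
def PolyGrowth {V : Type*} [NormedAddCommGroup V] (g : V → ℝ) : Prop :=
  Continuous g ∧ ∃ C : ℝ, 0 ≤ C ∧ ∃ k : ℕ, ∀ z, |g z| ≤ C * (1 + ‖z‖) ^ k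

namespace PolyGrowth

variable {V W : Type*} [NormedAddCommGroup V] [NormedAddCommGroup W]

lemma congr {g h : V → ℝ} (hg : PolyGrowth g) (hgh : ∀ z, g z = h z) : PolyGrowth h :=
  funext hgh ▸ hg

lemma mul {g h : V → ℝ} (hg : PolyGrowth g) (hh : PolyGrowth h) :
    PolyGrowth fun z => g z * h z := by
  obtain ⟨cg, C, hC, k, hk⟩ := hg
  obtain ⟨ch, D, hD, l, hl⟩ := hh
  refine ⟨cg.mul ch, C * D, by positivity, k + l, fun z => ?_⟩
  rw [abs_mul, pow_add]
  calc |g z| * |h z| ≤ (C * (1 + ‖z‖) ^ k) * (D * (1 + ‖z‖) ^ l) := by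
        gcongr
        · exact hk z
        · exact hl z
    _ = _ := by ring

lemma rpow {g : V → ℝ} (hg : PolyGrowth g) (h0 : ∀ z, 0 ≤ g z) {r : ℝ} (hr : 0 ≤ r) :
    PolyGrowth fun z => g z ^ r := by
  obtain ⟨cg, C, hC, k, hk⟩ := hg
  refine ⟨cg.rpow_const fun _ => Or.inr hr, C ^ r, by positivity, ⌈k * r⌉₊, fun z => ?_⟩
  rw [abs_of_nonneg (Real.rpow_nonneg (h0 z) r)]
  calc g z ^ r ≤ (C * (1 + ‖z‖) ^ k) ^ r :=
        Real.rpow_le_rpow (h0 z) ((le_abs_self _).trans (hk z)) hr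
    _ = C ^ r * (1 + ‖z‖) ^ (k * r) := by
        rw [Real.mul_rpow hC (by positivity), ← Real.rpow_natCast, ← Real.rpow_mul (by positivity)]
    _ ≤ C ^ r * (1 + ‖z‖) ^ (⌈k * r⌉₊ : ℝ) := by
        gcongr
        · linarith [norm_nonneg z]
        · exact Nat.le_ceil _
    _ = _ := by rw [Real.rpow_natCast]

lemma comp {g : W → ℝ} (hg : PolyGrowth g) {φ : V → W} (hφ : Continuous φ) {K : ℝ}
    (hK : 0 ≤ K) (hb : ∀ z, ‖φ z‖ ≤ K * (1 + ‖z‖)) : PolyGrowth fun z => g (φ z) := by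
  obtain ⟨cg, C, hC, k, hk⟩ := hg
  refine ⟨cg.comp hφ, C * (1 + K) ^ k, by positivity, k, fun z => ?_⟩
  refine (hk _).trans ?_
  rw [mul_assoc, ← mul_pow]
  have := hb z
  gcongr
  nlinarith [norm_nonneg z]

lemma comp_affine [NormedSpace ℝ V] [NormedSpace ℝ W] {g : W → ℝ} (hg : PolyGrowth g)
    (A : V →L[ℝ] W) (c : W) : PolyGrowth fun z => g (A z + c) := by
  refine hg.comp (by fun_prop) (K := ‖A‖ + ‖c‖) (by positivity) fun z => ?_
  have h1 := norm_add_le (A z) c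
  have h2 := A.le_opNorm z
  nlinarith [norm_nonneg z, norm_nonneg c, norm_nonneg A]

lemma integrable [NormedSpace ℝ V] [CompleteSpace V] [SecondCountableTopology V]
    [MeasurableSpace V] [BorelSpace V] {ν : Measure V} [ProbabilityTheory.IsGaussian ν]
    {g : V → ℝ} (hg : PolyGrowth g) : Integrable g ν := by
  obtain ⟨cg, C, hC, k, hk⟩ := hg
  have h0 : MemLp (fun z : V => ‖z‖) (k : ℝ≥0∞) ν :=
    (ProbabilityTheory.IsGaussian.memLp_id ν (k : ℝ≥0∞) (ENNReal.natCast_ne_top k)).norm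
  have hone : MemLp (fun _ : V => (1 : ℝ)) (k : ℝ≥0∞) ν := memLp_const 1
  have h1 : MemLp (fun z : V => 1 + ‖z‖) (k : ℝ≥0∞) ν := hone.add h0
  have h2 : Integrable (fun z : V => C * (1 + ‖z‖) ^ k) ν := by
    have h3 : Integrable (fun z : V => ‖1 + ‖z‖‖ ^ k) ν := h1.integrable_norm_pow'
    refine (h3.const_mul C).congr (Filter.Eventually.of_forall fun z => ?_)
    change C * ‖1 + ‖z‖‖ ^ k = C * (1 + ‖z‖) ^ k
    rw [Real.norm_of_nonneg (by positivity)]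
  exact h2.mono' cg.aestronglyMeasurable (Filter.Eventually.of_forall hk)

/-- Integrals of a function of polynomial growth in `(ε, z)` are continuous in `ε` at `0`. -/
lemma tendsto_integral [NormedSpace ℝ V] [CompleteSpace V] [SecondCountableTopology V]
    [MeasurableSpace V] [BorelSpace V] {ν : Measure V} [ProbabilityTheory.IsGaussian ν]
    {g : ℝ × V → ℝ} (hg : PolyGrowth g) :
    Filter.Tendsto (fun ε => ∫ z, g (ε, z) ∂ν) (nhds 0) (nhds (∫ z, g (0, z) ∂ν)) := by
  obtain ⟨cg, C, hC, k, hk⟩ := hg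
  have hB : PolyGrowth fun z : V => C * (2 + ‖z‖) ^ k := by
    refine ⟨by fun_prop, C * 2 ^ k, by positivity, k, fun z => ?_⟩
    rw [abs_of_nonneg (by positivity), mul_assoc, ← mul_pow]
    exact mul_le_mul_of_nonneg_left
      (pow_le_pow_left₀ (by positivity) (by linarith [norm_nonneg z]) k) hC
  refine tendsto_integral_filter_of_dominated_convergence (fun z => C * (2 + ‖z‖) ^ k) ?_ ?_
    hB.integrable ?_
  · exact Filter.Eventually.of_forall fun ε => (by fun_prop : Continuous fun z => g (ε, z)).aestronglyMeasurable
  · filter_upwards [Metric.ball_mem_nhds (0 : ℝ) one_pos] with ε hε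
    refine Filter.Eventually.of_forall fun z => ?_
    rw [mem_ball_zero_iff] at hε
    refine (hk _).trans ?_
    have : ‖(ε, z)‖ ≤ 1 + ‖z‖ := by
      rw [Prod.norm_def]
      exact max_le (by linarith [norm_nonneg z]) (by linarith)
    exact mul_le_mul_of_nonneg_left (pow_le_pow_left₀ (by positivity) (by linarith) k) hC
  · refine Filter.Eventually.of_forall fun z => ?_
    exact (by fun_prop : Continuous fun ε => g (ε, z)).tendsto 0

end PolyGrowth

/-! ### Gauge functions -/

lemma gauge_add_le {f : EuclideanSpace ℝ (Fin n) → ℝ} (hf : IsGauge f)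
    (x y : EuclideanSpace ℝ (Fin n)) : f (x + y) ≤ f x + f y := by
  have hc := hf.2.1
  have h := hc.2 (Set.mem_univ x) (Set.mem_univ y) (by norm_num : (0 : ℝ) ≤ 1 / 2)
    (by norm_num : (0 : ℝ) ≤ 1 / 2) (by norm_num)
  rw [← smul_add, hf.2.2 _ (by norm_num)] at h
  simp only [smul_eq_mul] at h
  linarith

lemma gauge_zero {f : EuclideanSpace ℝ (Fin n) → ℝ} (hf : IsGauge f) : f 0 = 0 := by
  have := hf.2.2 0 le_rfl 0
  simpa using this

lemma gauge_polyGrowth {f : EuclideanSpace ℝ (Fin n) → ℝ} (hf : IsGauge f) :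
    PolyGrowth f := by
  have hc : Continuous f := hf.2.1.locallyLipschitz.continuous
  obtain ⟨C, hC⟩ := (isCompact_closedBall (0 : EuclideanSpace ℝ (Fin n)) 1).exists_bound_of_continuousOn
    hc.continuousOn
  have hC0 : 0 ≤ C := (norm_nonneg _).trans (hC 0 (by simp))
  refine ⟨hc, C, hC0, 1, fun z => ?_⟩
  have h1 : f z = (1 + ‖z‖) * f ((1 + ‖z‖)⁻¹ • z) := by
    rw [← hf.2.2 _ (by positivity), smul_smul, mul_inv_cancel₀ (by positivity), one_smul]
  have h2 := hC ((1 + ‖z‖)⁻¹ • z) (by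
    rw [mem_closedBall_zero_iff, norm_smul, norm_inv, Real.norm_of_nonneg (by positivity),
      inv_mul_le_one₀ (by positivity)]
    linarith)
  rw [h1, abs_mul, abs_of_nonneg (by positivity : 0 ≤ 1 + ‖z‖), pow_one, mul_comm]
  gcongr
  exact h2

/-- Hahn–Banach: at each point `u` a gauge has a supporting linear functional, which by
homogeneity passes through the origin. -/
lemma gauge_exists_support {f : EuclideanSpace ℝ (Fin n) → ℝ} (hf : IsGauge f)
    (u : EuclideanSpace ℝ (Fin n)) :
    ∃ ξ : EuclideanSpace ℝ (Fin n), ⟪ξ, u⟫ = f u ∧ ∀ x, ⟪ξ, x⟫ ≤ f x := by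
  by_cases hu : u = 0
  · exact ⟨0, by simp [hu, gauge_zero hf], fun x => by simpa using hf.1 x⟩
  obtain ⟨g, hg, hgf⟩ := exists_extension_of_le_sublinear
    (LinearPMap.mkSpanSingleton u (f u) hu) f (fun c hc x => hf.2.2 c hc.le x)
    (gauge_add_le hf) (by
      rintro ⟨x, hx⟩
      obtain ⟨c, rfl⟩ := Submodule.mem_span_singleton.1 hx
      have h1 : LinearPMap.mkSpanSingleton (K := ℝ) u (f u) hu ⟨c • u, hx⟩ = c * f u :=
        LinearPMap.mkSpanSingleton'_apply _ _ _ _ _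
      rw [h1]
      rcases le_total 0 c with hc | hc
      · rw [hf.2.2 c hc]
      · exact (mul_nonpos_of_nonpos_of_nonneg hc (hf.1 u)).trans (hf.1 _))
  refine ⟨(InnerProductSpace.toDual ℝ _).symm (LinearMap.toContinuousLinearMap g), ?_, fun x => ?_⟩
  · rw [InnerProductSpace.toDual_symm_apply]
    have hu' : u ∈ (LinearPMap.mkSpanSingleton (σ := RingHom.id ℝ) u (f u) hu).domain :=
      Submodule.mem_span_singleton_self u
    have := hg ⟨u, hu'⟩
    rw [LinearMap.coe_toContinuousLinearMap']
    exact this.trans (LinearPMap.mkSpanSingleton'_apply_self _ _ _ _)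
  · rw [InnerProductSpace.toDual_symm_apply]
    exact hgf x

/-! ### Translation of the Gaussian measure -/

lemma integrable_stdGaussian_iff {g : EuclideanSpace ℝ (Fin n) → ℝ} :
    Integrable g (stdGaussian n) ↔ Integrable fun x => dens n x * g x := by
  have : stdGaussian n = volume.withDensity fun x => ENNReal.ofReal (dens n x) := rfl
  rw [this, integrable_withDensity_iff_integrable_smul']
  · simp [dens_nonneg]
  · exact continuous_dens.measurable.ennreal_ofReal
  · simp

lemma dens_sub (v w : EuclideanSpace ℝ (Fin n)) (ε : ℝ) :
    dens n (w - ε • v) = dens n w * rexp (ε * ⟪v, w⟫ - ε ^ 2 * ‖v‖ ^ 2 / 2) := by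
  unfold dens
  rw [mul_assoc, ← Real.exp_add]
  congr 2
  rw [norm_sub_sq_real, norm_smul, mul_pow, inner_smul_right, real_inner_comm, Real.norm_eq_abs,
    sq_abs]
  ring

lemma polyGrowth_inner (v : EuclideanSpace ℝ (Fin n)) : PolyGrowth fun w => ⟪v, w⟫ := by
  refine ⟨by fun_prop, ‖v‖, norm_nonneg v, 1, fun w => ?_⟩
  have := abs_real_inner_le_norm v w
  nlinarith [norm_nonneg v, norm_nonneg w]

lemma integral_inner_eq_zero (v : EuclideanSpace ℝ (Fin n)) :
    ∫ w, ⟪v, w⟫ ∂(stdGaussian n) = 0 := by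
  rw [stdGaussian_eq]
  exact ProbabilityTheory.integral_strongDual_stdGaussian (innerSL ℝ v)

/-- A substitute for Gaussian integration by parts. By the Cameron–Martin formula,
`E g(G + εv) = E g(G) exp (ε⟨v, G⟩ - ε²‖v‖²/2)`, and `exp t ≥ 1 + t`. -/
lemma shift_ineq {g : EuclideanSpace ℝ (Fin n) → ℝ} (hg : PolyGrowth g) (h0 : ∀ w, 0 ≤ g w)
    (v : EuclideanSpace ℝ (Fin n)) (ε : ℝ) :
    ε * ∫ w, g w * ⟪v, w⟫ ∂(stdGaussian n) ≤
      ∫ w, (g (w + ε • v) - g w) ∂(stdGaussian n)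
        + ε ^ 2 * ‖v‖ ^ 2 / 2 * ∫ w, g w ∂(stdGaussian n) := by
  have hi : Integrable g (stdGaussian n) := hg.integrable
  have hiv : Integrable (fun w => g w * ⟪v, w⟫) (stdGaussian n) :=
    (hg.mul (polyGrowth_inner v)).integrable
  have his : Integrable (fun w => g (w + ε • v)) (stdGaussian n) :=
    (hg.comp_affine (ContinuousLinearMap.id ℝ _) (ε • v)).integrable
  have h1 : ∫ w, g (w + ε • v) ∂(stdGaussian n) = ∫ w, dens n (w - ε • v) * g w := by
    rw [integral_stdGaussian, ← integral_sub_right_eq_self _ (ε • v)]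
    simp
  have h1i : Integrable fun w => dens n (w - ε • v) * g w := by
    have := (integrable_stdGaussian_iff.1 his).comp_sub_right (ε • v)
    simpa using this
  have hadd : Integrable (fun w => g w + ε * (g w * ⟪v, w⟫)) (stdGaussian n) :=
    hi.add (hiv.const_mul ε)
  have hl : Integrable (fun w => g w + ε * (g w * ⟪v, w⟫) - ε ^ 2 * ‖v‖ ^ 2 / 2 * g w)
      (stdGaussian n) := hadd.sub (hi.const_mul _)
  have h2 : ∫ w, (g w + ε * (g w * ⟪v, w⟫) - ε ^ 2 * ‖v‖ ^ 2 / 2 * g w) ∂(stdGaussian n) ≤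
      ∫ w, g (w + ε • v) ∂(stdGaussian n) := by
    rw [h1, integral_stdGaussian]
    refine integral_mono (integrable_stdGaussian_iff.1 hl) h1i fun w => ?_
    simp only [smul_eq_mul]
    rw [dens_sub, mul_assoc]
    refine mul_le_mul_of_nonneg_left ?_ (dens_nonneg w)
    have := Real.add_one_le_exp (ε * ⟪v, w⟫ - ε ^ 2 * ‖v‖ ^ 2 / 2)
    nlinarith [h0 w]
  rw [integral_sub hadd (hi.const_mul _), integral_add hi (hiv.const_mul ε),
    integral_const_mul, integral_const_mul] at h2
  rw [integral_sub his hi]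
  linarith

/-- The tangent-line inequality for the convex function `t ↦ t ^ q`. -/
lemma rpow_sub_rpow_le {t r q : ℝ} (ht : 0 ≤ t) (hr : 0 ≤ r) (hq : 1 ≤ q) :
    t ^ q - r ^ q ≤ q * t ^ (q - 1) * (t - r) := by
  rcases ht.eq_or_lt with rfl | ht
  · rw [Real.zero_rpow (by linarith)]
    rcases hq.eq_or_lt with rfl | hq
    · simp
    · rw [Real.zero_rpow (by linarith)]
      simp [Real.rpow_nonneg hr]
  · have h := one_add_mul_self_le_rpow_one_add (s := r / t - 1) (p := q)
      (by have := div_nonneg hr ht.le; linarith) hq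
    rw [add_sub_cancel, Real.div_rpow hr ht.le, le_div_iff₀ (by positivity)] at h
    have h2 : t ^ q = t ^ (q - 1) * t := by
      rw [← Real.rpow_add_one ht.ne', sub_add_cancel]
    have h3 : (1 + q * (r / t - 1)) * t ^ q = t ^ q + q * t ^ (q - 1) * (r - t) := by
      rw [h2]; field_simp
    rw [h3] at h
    linarith

/-- The inequality that integration by parts would give for `E F(G) ⟨v, G⟩` with
`F w = f (s (u + w)) ^ q`, since the derivative of `f` in direction `v` is at most `f v`. It follows
from `shift_ineq` as `ε → 0`, with no differentiability of `f` involved. -/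
lemma ibp_ineq {f : EuclideanSpace ℝ (Fin n) → ℝ} (hf : IsGauge f) {q s : ℝ} (hq : 1 ≤ q)
    (hs : 0 ≤ s) (u v : EuclideanSpace ℝ (Fin n)) :
    ∫ w, f (s • (u + w)) ^ q * ⟪v, w⟫ ∂(stdGaussian n) ≤
      q * s * f v * ∫ w, f (s • (u + w)) ^ (q - 1) ∂(stdGaussian n) := by
  have hP := gauge_polyGrowth hf
  have hF : PolyGrowth fun w => f (s • (u + w)) := by
    refine (hP.comp_affine (s • ContinuousLinearMap.id ℝ _) (s • u)).congr fun w => ?_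
    simp [add_comm]
  have hFq := hF.rpow (fun w => hf.1 _) (r := q) (by linarith)
  have hG : PolyGrowth fun z : ℝ × EuclideanSpace ℝ (Fin n) => f (s • (u + (z.2 + z.1 • v))) := by
    refine (hP.comp_affine (s • (ContinuousLinearMap.snd ℝ ℝ _ +
      (ContinuousLinearMap.fst ℝ ℝ _).smulRight v)) (s • u)).congr fun w => ?_
    simp [add_comm]
  have hGq := hG.rpow (fun w => hf.1 _) (r := q - 1) (by linarith)
  have hstep : ∀ ε : ℝ, 0 < ε → ∫ w, f (s • (u + w)) ^ q * ⟪v, w⟫ ∂(stdGaussian n) ≤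
      q * s * f v * ∫ w, f (s • (u + (w + ε • v))) ^ (q - 1) ∂(stdGaussian n) +
        ε * (‖v‖ ^ 2 / 2 * ∫ w, f (s • (u + w)) ^ q ∂(stdGaussian n)) := by
    intro ε hε
    have h1 := shift_ineq hFq (fun w => Real.rpow_nonneg (hf.1 _) q) v ε
    have hs1 := hFq.comp_affine (ContinuousLinearMap.id ℝ _) (ε • v)
    have hs2 := (hF.comp_affine (ContinuousLinearMap.id ℝ _) (ε • v)).rpow (fun w => hf.1 _)
      (r := q - 1) (by linarith)
    have h2 : ∫ w, (f (s • (u + (w + ε • v))) ^ q - f (s • (u + w)) ^ q) ∂(stdGaussian n) ≤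
        ∫ w, (q * (ε * s * f v)) * f (s • (u + (w + ε • v))) ^ (q - 1) ∂(stdGaussian n) := by
      refine integral_mono (hs1.integrable.sub hFq.integrable) (hs2.integrable.const_mul _)
        fun w => ?_
      refine (rpow_sub_rpow_le (hf.1 _) (hf.1 _) hq).trans ?_
      have h3 : f (s • (u + (w + ε • v))) ≤ f (s • (u + w)) + ε * s * f v := by
        rw [← hf.2.2 _ (by positivity)]
        refine le_trans (le_of_eq ?_) (gauge_add_le hf _ _)
        congr 1
        module
      have h4 : 0 ≤ f (s • (u + (w + ε • v))) ^ (q - 1) := Real.rpow_nonneg (hf.1 _) _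
      calc _ ≤ q * f (s • (u + (w + ε • v))) ^ (q - 1) * (ε * s * f v) := by
            refine mul_le_mul_of_nonneg_left ?_ (by positivity)
            linarith
        _ = _ := by ring
    rw [integral_const_mul] at h2
    refine le_of_mul_le_mul_left ?_ hε
    linarith
  have hlim : Filter.Tendsto (fun ε : ℝ =>
      q * s * f v * ∫ w, f (s • (u + (w + ε • v))) ^ (q - 1) ∂(stdGaussian n) +
        ε * (‖v‖ ^ 2 / 2 * ∫ w, f (s • (u + w)) ^ q ∂(stdGaussian n))) (nhdsWithin 0 (Set.Ioi 0))
      (nhds (q * s * f v * ∫ w, f (s • (u + (w + (0 : ℝ) • v))) ^ (q - 1) ∂(stdGaussian n) +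
        0 * (‖v‖ ^ 2 / 2 * ∫ w, f (s • (u + w)) ^ q ∂(stdGaussian n)))) := by
    refine Filter.Tendsto.mono_left ?_ nhdsWithin_le_nhds
    exact (hGq.tendsto_integral.const_mul _).add (Filter.tendsto_id.mul_const _)
  have := ge_of_tendsto hlim (eventually_nhdsWithin_of_forall hstep)
  simpa using this

/-- Since `f ≥ 0`, also `f x ≥ max ⟨ξ, x⟩ 0`, and `E max ⟨ξ, G⟩ 0 = ‖ξ‖ / √(2π)`. -/
lemma norm_support_le {f : EuclideanSpace ℝ (Fin n) → ℝ} (hf : IsGauge f)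
    {ξ : EuclideanSpace ℝ (Fin n)} (hξ : ∀ x, ⟪ξ, x⟫ ≤ f x) :
    ‖ξ‖ ≤ √(2 * π) * ∫ x, f x ∂(stdGaussian n) := by
  have hi : Integrable (fun x => ⟪ξ, x⟫) (stdGaussian n) := (polyGrowth_inner ξ).integrable
  have h1 : ∫ x, (|⟪ξ, x⟫| + ⟪ξ, x⟫) ∂(stdGaussian n) ≤ ∫ x, 2 * f x ∂(stdGaussian n) := by
    refine integral_mono (hi.abs.add hi) ((gauge_polyGrowth hf).integrable.const_mul 2) fun x => ?_
    have := hξ x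
    have := hf.1 x
    rcases abs_cases ⟪ξ, x⟫ with h | h <;> simp only <;> linarith
  rw [integral_add hi.abs hi, integral_abs_inner, integral_inner_eq_zero, integral_const_mul,
    add_zero, div_le_iff₀ (by positivity)] at h1
  linarith

/-- If `ξ` lies in the polar set `{η | ⟨η, ·⟩ ≤ f}` then `f ξ = ⟨η, ξ⟩` for some `η` in that set,
and both norms are controlled by `norm_support_le`. -/
lemma gauge_support_le {f : EuclideanSpace ℝ (Fin n) → ℝ} (hf : IsGauge f)
    {ξ : EuclideanSpace ℝ (Fin n)} (hξ : ∀ x, ⟪ξ, x⟫ ≤ f x) :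
    f ξ ≤ 2 * π * (∫ x, f x ∂(stdGaussian n)) ^ 2 := by
  obtain ⟨η, h1, h2⟩ := gauge_exists_support hf ξ
  have hξ' := norm_support_le hf hξ
  have hη' := norm_support_le hf h2
  rw [← h1]
  calc ⟪η, ξ⟫ ≤ ‖η‖ * ‖ξ‖ := real_inner_le_norm η ξ
    _ ≤ (√(2 * π) * ∫ x, f x ∂(stdGaussian n)) * (√(2 * π) * ∫ x, f x ∂(stdGaussian n)) :=
        mul_le_mul hη' hξ' (norm_nonneg _) ((norm_nonneg _).trans hη')
    _ = (√(2 * π)) ^ 2 * (∫ x, f x ∂(stdGaussian n)) ^ 2 := by ring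
    _ = _ := by rw [Real.sq_sqrt (by positivity)]

/-! ### The recursive moment inequality -/

/-- Invariance of the law of two independent standard Gaussians under rotation by `-π/4`. -/
lemma integral_rotation {g : EuclideanSpace ℝ (Fin n) × EuclideanSpace ℝ (Fin n) → ℝ}
    (hg : Continuous g) :
    ∫ z, g z ∂((stdGaussian n).prod (stdGaussian n)) =
      ∫ z, g ((√2 / 2) • (z.1 - z.2), (√2 / 2) • (z.1 + z.2))
        ∂((stdGaussian n).prod (stdGaussian n)) := by
  have hμ : ∫ x, id x ∂(stdGaussian n) = 0 := by
    rw [stdGaussian_eq]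
    exact ProbabilityTheory.integral_id_stdGaussian
  conv_lhs => rw [← ProbabilityTheory.IsGaussian.map_rotation_eq_self hμ (-(π / 4))]
  rw [integral_map (by fun_prop) (by fun_prop)]
  simp only [ContinuousLinearMap.rotation_apply, Real.cos_neg, Real.sin_neg, Real.cos_pi_div_four,
    Real.sin_pi_div_four, neg_neg, neg_smul, smul_add, sub_eq_add_neg, smul_neg]

/-- Jensen's inequality for a gauge at the centred Gaussian translated by `y`. -/
lemma le_integral_gauge_add {f : EuclideanSpace ℝ (Fin n) → ℝ} (hf : IsGauge f)
    (y : EuclideanSpace ℝ (Fin n)) : f y ≤ ∫ x, f (x + y) ∂(stdGaussian n) := by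
  obtain ⟨ξ, h1, h2⟩ := gauge_exists_support hf y
  have hi : Integrable (fun x => ⟪ξ, x⟫) (stdGaussian n) := (polyGrowth_inner ξ).integrable
  have h3 : ∫ x, (⟪ξ, x⟫ + f y) ∂(stdGaussian n) ≤ ∫ x, f (x + y) ∂(stdGaussian n) := by
    refine integral_mono (hi.add (integrable_const _))
      ((gauge_polyGrowth hf).comp_affine (ContinuousLinearMap.id ℝ _) y).integrable fun x => ?_
    have := h2 (x + y)
    rw [inner_add_right, h1] at this
    exact this
  rw [integral_add hi (integrable_const _), integral_inner_eq_zero] at h3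
  simpa using h3

/-- For fixed `u`, bound `f (s (u - w))` below by the support functional of `f` at `u`, and
control the resulting linear term in `w` by `ibp_ineq`. -/
lemma fibre_ineq {f : EuclideanSpace ℝ (Fin n) → ℝ} (hf : IsGauge f) {q s : ℝ} (hq : 1 ≤ q)
    (hs : 0 ≤ s) (u : EuclideanSpace ℝ (Fin n)) :
    ∫ w, (s * (f u * f (s • (u + w)) ^ q) - s * (q * s *
        (2 * π * (∫ x, f x ∂(stdGaussian n)) ^ 2)) * f (s • (u + w)) ^ (q - 1)) ∂(stdGaussian n) ≤
      ∫ w, f (s • (u - w)) * f (s • (u + w)) ^ q ∂(stdGaussian n) := by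
  obtain ⟨ξ, h1, h2⟩ := gauge_exists_support hf u
  have hP := gauge_polyGrowth hf
  have hF : PolyGrowth fun w => f (s • (u + w)) := by
    refine (hP.comp_affine (s • ContinuousLinearMap.id ℝ _) (s • u)).congr fun w => ?_
    simp [add_comm]
  have hF' : PolyGrowth fun w => f (s • (u - w)) := by
    refine (hP.comp_affine (-(s • ContinuousLinearMap.id ℝ _)) (s • u)).congr fun w => ?_
    congr 1
    simp only [neg_apply, smul_apply, ContinuousLinearMap.id_apply]
    module
  have hFq := hF.rpow (fun w => hf.1 _) (r := q) (by linarith)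
  have hFq' := hF.rpow (fun w => hf.1 _) (r := q - 1) (by linarith)
  have hi1 : Integrable (fun w => s * (f u * f (s • (u + w)) ^ q)) (stdGaussian n) :=
    (hFq.integrable.const_mul _).const_mul _
  have hi2 : Integrable (fun w => f (s • (u + w)) ^ q * ⟪ξ, w⟫) (stdGaussian n) :=
    (hFq.mul (polyGrowth_inner ξ)).integrable
  have h3 : ∫ w, (s * (f u * f (s • (u + w)) ^ q) - s * (f (s • (u + w)) ^ q * ⟪ξ, w⟫))
      ∂(stdGaussian n) ≤ ∫ w, f (s • (u - w)) * f (s • (u + w)) ^ q ∂(stdGaussian n) := by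
    refine integral_mono (hi1.sub (hi2.const_mul s)) (hF'.mul hFq).integrable fun w => ?_
    have h4 := h2 (s • (u - w))
    rw [inner_smul_right, inner_sub_right, h1] at h4
    have h5 : 0 ≤ f (s • (u + w)) ^ q := Real.rpow_nonneg (hf.1 _) _
    have h6 := mul_le_mul_of_nonneg_right h4 h5
    simp only
    linarith
  refine le_trans ?_ h3
  rw [integral_sub hi1 (hFq'.integrable.const_mul _), integral_sub hi1 (hi2.const_mul s)]
  refine sub_le_sub_left ?_ _
  rw [integral_const_mul, integral_const_mul, mul_assoc]
  refine mul_le_mul_of_nonneg_left ?_ hs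
  refine (ibp_ineq hf hq hs u ξ).trans ?_
  refine mul_le_mul_of_nonneg_right ?_ (integral_nonneg fun w => Real.rpow_nonneg (hf.1 _) _)
  exact mul_le_mul_of_nonneg_left (gauge_support_le hf h2) (by positivity)

/-- With `M r = E f(G) ^ r`, this reads `M (q + 1) ≤ 2 M 1 * M q + 2π q (M 1)² M (q - 1)`. -/
lemma moment_ineq {f : EuclideanSpace ℝ (Fin n) → ℝ} (hf : IsGauge f) {q : ℝ} (hq : 1 ≤ q) :
    ∫ x, f x ^ (q + 1) ∂(stdGaussian n) ≤
      2 * (∫ x, f x ∂(stdGaussian n)) * ∫ x, f x ^ q ∂(stdGaussian n) +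
      q * (2 * π * (∫ x, f x ∂(stdGaussian n)) ^ 2) * ∫ x, f x ^ (q - 1) ∂(stdGaussian n) := by
  set s : ℝ := √2 / 2 with hs
  have hs0 : 0 < s := by positivity
  have hss : s * s = 1 / 2 := by
    rw [hs]; have := Real.mul_self_sqrt (show (0 : ℝ) ≤ 2 by norm_num); linarith
  set β := 2 * π * (∫ x, f x ∂(stdGaussian n)) ^ 2 with hβ
  set μ := stdGaussian n with hμ
  have hP := gauge_polyGrowth hf
  have hfst : PolyGrowth fun z : EuclideanSpace ℝ (Fin n) × EuclideanSpace ℝ (Fin n) => f z.1 :=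
    (hP.comp_affine (ContinuousLinearMap.fst ℝ _ _) 0).congr fun z => by simp
  have hsnd : PolyGrowth fun z : EuclideanSpace ℝ (Fin n) × EuclideanSpace ℝ (Fin n) => f z.2 :=
    (hP.comp_affine (ContinuousLinearMap.snd ℝ _ _) 0).congr fun z => by simp
  have hadd : PolyGrowth fun z : EuclideanSpace ℝ (Fin n) × EuclideanSpace ℝ (Fin n) =>
      f (s • (z.1 + z.2)) :=
    (hP.comp_affine (s • (ContinuousLinearMap.fst ℝ _ _ + ContinuousLinearMap.snd ℝ _ _)) 0).congr
      fun z => by simp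
  have hsub : PolyGrowth fun z : EuclideanSpace ℝ (Fin n) × EuclideanSpace ℝ (Fin n) =>
      f (s • (z.1 - z.2)) :=
    (hP.comp_affine (s • (ContinuousLinearMap.fst ℝ _ _ - ContinuousLinearMap.snd ℝ _ _)) 0).congr
      fun z => by simp
  have hsndq := hsnd.rpow (fun z => hf.1 _) (r := q) (by linarith)
  have hsndq' := hsnd.rpow (fun z => hf.1 _) (r := q - 1) (by linarith)
  have haddq := hadd.rpow (fun z => hf.1 _) (r := q) (by linarith)
  have haddq' := hadd.rpow (fun z => hf.1 _) (r := q - 1) (by linarith)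
  have h1 : (∫ x, f x ∂μ) * ∫ x, f x ^ q ∂μ =
      ∫ z, f (s • (z.1 - z.2)) * f (s • (z.1 + z.2)) ^ q ∂(μ.prod μ) := by
    rw [← integral_prod_mul f (fun x => f x ^ q)]
    exact integral_rotation (hfst.mul hsndq).1
  have hiA : Integrable (fun z => s * (f z.1 * f (s • (z.1 + z.2)) ^ q)) (μ.prod μ) :=
    (hfst.mul haddq).integrable.const_mul s
  have hiB : Integrable (fun z => s * (q * s * β) * f (s • (z.1 + z.2)) ^ (q - 1)) (μ.prod μ) :=
    haddq'.integrable.const_mul _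
  have hiC : Integrable (fun z => f (s • (z.1 - z.2)) * f (s • (z.1 + z.2)) ^ q) (μ.prod μ) :=
    (hsub.mul haddq).integrable
  have h3 : ∫ z, (s * (f z.1 * f (s • (z.1 + z.2)) ^ q) -
      s * (q * s * β) * f (s • (z.1 + z.2)) ^ (q - 1)) ∂(μ.prod μ) ≤
      ∫ z, f (s • (z.1 - z.2)) * f (s • (z.1 + z.2)) ^ q ∂(μ.prod μ) := by
    have hiAB : Integrable (fun z => s * (f z.1 * f (s • (z.1 + z.2)) ^ q) -
        s * (q * s * β) * f (s • (z.1 + z.2)) ^ (q - 1)) (μ.prod μ) := hiA.sub hiB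
    rw [integral_prod _ hiAB, integral_prod _ hiC]
    exact integral_mono hiAB.integral_prod_left hiC.integral_prod_left
      fun u => fibre_ineq hf hq hs0.le u
  have h4 : ∫ z, f z.1 * f (s • (z.1 + z.2)) ^ q ∂(μ.prod μ) =
      ∫ z, f (s • (z.1 + z.2)) * f z.2 ^ q ∂(μ.prod μ) := by
    rw [integral_rotation (hadd.mul hsndq).1]
    refine integral_congr_ae (Filter.Eventually.of_forall fun z => ?_)
    have h5 : s • (s • (z.1 - z.2) + s • (z.1 + z.2)) = z.1 := by
      rw [← smul_add, smul_smul, hss]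
      module
    simp only
    rw [← hs, h5]
  have h5 : ∫ z, f (s • (z.1 + z.2)) ^ (q - 1) ∂(μ.prod μ) = ∫ x, f x ^ (q - 1) ∂μ := by
    have h6 := integral_rotation hsndq'.1
    rw [← h6]
    have := integral_prod_mul (μ := μ) (ν := μ) (fun _ => (1 : ℝ)) (fun x => f x ^ (q - 1))
    simpa using this
  have h6 : s * ∫ x, f x ^ (q + 1) ∂μ ≤ ∫ z, f (s • (z.1 + z.2)) * f z.2 ^ q ∂(μ.prod μ) := by
    rw [integral_prod_symm _ (hadd.mul hsndq).integrable, ← integral_const_mul]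
    refine integral_mono ((hP.rpow hf.1 (by linarith)).integrable.const_mul s)
      (hadd.mul hsndq).integrable.integral_prod_right fun y => ?_
    simp only
    rw [integral_mul_const, Real.rpow_add_one' (hf.1 y) (by linarith), mul_comm (f y ^ q),
      ← mul_assoc]
    refine mul_le_mul_of_nonneg_right ?_ (Real.rpow_nonneg (hf.1 y) q)
    simp_rw [hf.2.2 s hs0.le]
    rw [integral_const_mul]
    exact mul_le_mul_of_nonneg_left (le_integral_gauge_add hf y) hs0.le
  rw [integral_sub hiA hiB, integral_const_mul, integral_const_mul, h4, h5, ← h1] at h3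
  have h7 := mul_le_mul_of_nonneg_left h6 hs0.le
  rw [← mul_assoc, hss] at h7
  rw [show s * (q * s * β) = (s * s) * (q * β) by ring, hss] at h3
  linarith

/-- Lyapunov's inequality between moments. -/
lemma moment_le {f : EuclideanSpace ℝ (Fin n) → ℝ} (hf : IsGauge f) {p r : ℝ} (hp : 0 < p)
    (hr : 0 ≤ r) (hrp : r ≤ p) :
    ∫ x, f x ^ r ∂(stdGaussian n) ≤ ((∫ x, f x ^ p ∂(stdGaussian n)) ^ (1 / p)) ^ r := by
  have hP := gauge_polyGrowth hf
  rcases hr.eq_or_lt with rfl | hr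
  · simp
  have hc := convexOn_rpow (p := p / r) ((one_le_div hr).2 hrp)
  have h1 := hc.map_integral_le (μ := stdGaussian n) (f := fun x => f x ^ r)
    (continuousOn_id.rpow_const fun x _ => Or.inr (by positivity)) isClosed_Ici
    (Filter.Eventually.of_forall fun x => Real.rpow_nonneg (hf.1 x) r)
    (hP.rpow hf.1 hr.le).integrable
    (((hP.rpow hf.1 hr.le).rpow (fun x => Real.rpow_nonneg (hf.1 x) r) (by positivity)).integrable)
  have h2 : ∀ x, (f x ^ r) ^ (p / r) = f x ^ p := by
    intro x
    rw [← Real.rpow_mul (hf.1 x)]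
    congr 1
    field_simp
  simp only [h2] at h1
  have h0 : 0 ≤ ∫ x, f x ^ r ∂(stdGaussian n) := integral_nonneg fun x => Real.rpow_nonneg (hf.1 x) r
  have h3 := Real.rpow_le_rpow (by positivity) h1 (by positivity : 0 ≤ r / p)
  rw [← Real.rpow_mul h0, show p / r * (r / p) = 1 by field_simp, Real.rpow_one] at h3
  rw [← Real.rpow_mul (integral_nonneg fun x => Real.rpow_nonneg (hf.1 x) p)]
  rwa [one_div_mul_eq_div]

end KahaneGauge

/-- Kahane's inequality for gauge functions of a standard Gaussian random vector:
`(E ‖G‖^p)^{1/p} ≤ 3 √p ⬝ E ‖G‖` for all `p ≥ 2`. -/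
theorem kahane_gauge (n : ℕ) (hn : 1 ≤ n)
    (f : EuclideanSpace ℝ (Fin n) → ℝ) (hf : IsGauge f) (p : ℝ) (hp : 2 ≤ p) :
    (∫ x, f x ^ p ∂(stdGaussian n)) ^ (1 / p) ≤
      3 * Real.sqrt p * ∫ x, f x ∂(stdGaussian n) := by
  set m := (∫ x, f x ^ p ∂(stdGaussian n)) ^ (1 / p) with hm
  have hM0 : 0 ≤ ∫ x, f x ^ p ∂(stdGaussian n) :=
    integral_nonneg fun x => Real.rpow_nonneg (hf.1 x) p
  have hmp : m ^ p = ∫ x, f x ^ p ∂(stdGaussian n) := by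
    rw [hm, one_div, Real.rpow_inv_rpow hM0 (by linarith)]
  have h := KahaneGauge.moment_ineq hf (q := p - 1) (by linarith)
  have h1 := KahaneGauge.moment_le hf (p := p) (r := p - 1) (by linarith) (by linarith)
    (by linarith)
  have h2 := KahaneGauge.moment_le hf (p := p) (r := p - 1 - 1) (by linarith) (by linarith)
    (by linarith)
  rw [← hm] at h1 h2
  rw [sub_add_cancel, ← hmp] at h
  set e := ∫ x, f x ∂(stdGaussian n) with he
  have he0 : 0 ≤ e := integral_nonneg hf.1
  have hm0 : 0 ≤ m := Real.rpow_nonneg hM0 _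
  rcases hm0.eq_or_lt with hm0 | hm0
  · rw [← hm0]; positivity
  have h3 : m ^ p ≤ 2 * e * m ^ (p - 1) + (p - 1) * (2 * π * e ^ 2) * m ^ (p - 1 - 1) := by
    refine h.trans ?_
    have : 0 ≤ p - 1 := by linarith
    gcongr
  have e1 : m ^ (p - 1) = m ^ (p - 1 - 1) * m := by
    rw [← Real.rpow_add_one hm0.ne', sub_add_cancel]
  have e2 : m ^ p = m ^ (p - 1 - 1) * m * m := by
    rw [← e1, ← Real.rpow_add_one hm0.ne', sub_add_cancel]
  have h4 : m * m ≤ 2 * e * m + (p - 1) * (2 * π * e ^ 2) := by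
    have hpos : 0 < m ^ (p - 1 - 1) := by positivity
    refine le_of_mul_le_mul_left ?_ hpos
    rw [e2, e1] at h3
    linarith
  have hpi : 2 * π * e ^ 2 ≤ 6.3 * e ^ 2 := by
    have := Real.pi_lt_d2
    gcongr
    linarith
  have h5 : m * m ≤ 2 * e * m + (p - 1) * (6.3 * e ^ 2) := by
    have := mul_le_mul_of_nonneg_left hpi (by linarith : 0 ≤ p - 1)
    linarith
  by_contra! hlt
  set t := √p with ht
  have htt : t ^ 2 = p := Real.sq_sqrt (by linarith)
  have ht1 : 1 ≤ t := by rw [ht, Real.one_le_sqrt]; linarith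
  rw [← htt] at h5
  -- `m ↦ m² - 2em` is increasing for `m ≥ e`, and `(3te)² - 2e (3te) ≥ 6.3 (t² - 1) e²`
  -- because the quadratic `2.7 t² - 6 t + 6.3` has negative discriminant.
  have h6 : (3 * t * e) ^ 2 - 2 * e * (3 * t * e) < m ^ 2 - 2 * e * m := by
    have h7 : e ≤ 3 * t * e := by nlinarith
    nlinarith
  have h8 : 0 ≤ (2.7 * t ^ 2 - 6 * t + 6.3) * e ^ 2 :=
    mul_nonneg (by nlinarith [sq_nonneg (t - 1)]) (sq_nonneg e)
  nlinarith

end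
end
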